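/- For every convex body K in R^d, there exist positive constants c_1, c_2 depending only on d such that c_1 · n^{(d-1)/(d+1)} ≤ log E|Q(X_n)| ≤ c_2 · n^{(d-1)/(d+1)} for all sufficiently large n, where Q(X_n) is the collection of convex polytopes spanned by subsets of an n-point uniform sample from K. -/

import Mathlib

open MeasureTheory Set Filter
noncomputable section

/-- Euclidean space `ℝ^d`. -/
abbrev E (d : ℕ) := EuclideanSpace ℝ (Fin d)

/-- A set of points is in convex position if no point lies in the convex hull of the others. -/
def ConvexPosition {d : ℕ} (X : Set (E d)) : Prop :=
  ∀ x ∈ X, x ∉ convexHull ℝ (X \ {x})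

/-- The uniform (normalized Lebesgue) measure on `K`. -/
def unifOn (d : ℕ) (K : Set (E d)) : Measure (E d) :=
  (volume K)⁻¹ • volume.restrict K

/-- The distribution of `n` independent uniform points in `K`. -/
def sampleMeasure (d n : ℕ) (K : Set (E d)) : Measure (Fin n → E d) :=
  Measure.pi fun _ => unifOn d K

/-- `p(n,K)`: probability that `n` i.i.d. uniform points in `K` are in convex position. -/
def pConvex (d n : ℕ) (K : Set (E d)) : ℝ :=
  (sampleMeasure d n K {x | ConvexPosition (Set.range x)}).toReal

/-- The number of convex polytopes spanned by the sample `x`: the number of subsets of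
at least 3 of the points that are in convex position. -/
def numPolytopes (d n : ℕ) (x : Fin n → E d) : ℕ :=
  Set.ncard {s : Finset (Fin n) | 3 ≤ s.card ∧ ConvexPosition (x '' ↑s)}

/-!
An affine image of `K` lies between two cubes whose sizes depend only on `d = m + 1`, so the density
of the sample may be assumed to be bounded above everywhere and below near the origin.

Lower bound: put about `Q ^ m` disjoint caps of volume about `Q ^ (-(m + 2))` on a paraboloid, such
that every choice of one point in each cap is in convex position. If `Q ^ (m + 2)` is a small
multiple of `n`, each cap is expected to contain many sample points, and the expected number of
choices is at least `exp (c * Q ^ m)`.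

Upper bound: every vertex of a polytope in the cube lies on the graph, over a coordinate hyperplane,
of one of `2 * d` convex Lipschitz functions. Rounding such a function to multiples of `1 / N ^ 2`
on a grid of mesh `1 / N` leaves `exp (O (N ^ m))` possibilities, since along a grid line the
increments of the rounded function are monotone up to one unit. The second differences of a convex
Lipschitz function sum to `O (N ^ m / N ^ 2)`, so the rounded values determine a neighbourhood of
the graph of volume `O (1 / N ^ 2)`. A set of volume `p` is expected to contain at most
`exp (O (n * p))` subsets of the sample, and the two exponents balance when `N ^ (m + 2)` is of
order `n`.
-/

section Measurability

lemma convexHull_range_eq_image_stdSimplex {ι V : Type*} [Fintype ι] [AddCommGroup V] [Module ℝ V]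
    (z : ι → V) :
    convexHull ℝ (range z) = (fun w : ι → ℝ => ∑ j, w j • z j) '' stdSimplex ℝ ι := by
  classical
  have hz : (fun w : ι → ℝ => ∑ j, w j • z j) = Fintype.linearCombination ℝ z := by
    ext w
    rw [Fintype.linearCombination_apply]
  rw [hz, ← convexHull_rangle_single_eq_stdSimplex, LinearMap.image_convexHull, ← range_comp]
  congr 2
  ext i
  simp [Fintype.linearCombination_apply_single]

lemma isClosed_setOf_mem_convexHull_image {ι V : Type*} [AddCommGroup V] [Module ℝ V]
    [TopologicalSpace V] [ContinuousAdd V] [ContinuousSMul ℝ V] [T2Space V]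
    (t : Finset ι) (i : ι) :
    IsClosed {x : ι → V | x i ∈ convexHull ℝ (x '' t)} := by
  have projection_eq : {x : ι → V | x i ∈ convexHull ℝ (x '' t)} =
      Prod.snd '' {q : stdSimplex ℝ t × (ι → V) | ∑ j : t, (q.1 : t → ℝ) j • q.2 j = q.2 i} := by
    ext x
    have image_eq : x '' t = range fun j : t => x j := image_eq_range x t
    rw [mem_ofPred_eq, image_eq, convexHull_range_eq_image_stdSimplex]
    exact ⟨fun ⟨w, hw, hsum⟩ => ⟨(⟨w, hw⟩, x), hsum, rfl⟩,
      fun ⟨⟨w, _⟩, hsum, hx⟩ => hx ▸ ⟨w, w.2, hsum⟩⟩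
  have : CompactSpace (stdSimplex ℝ t) := isCompact_iff_compactSpace.mp (isCompact_stdSimplex ℝ _)
  rw [projection_eq]
  refine isClosedMap_snd_of_compactSpace _ (isClosed_eq ?_ (by fun_prop))
  refine continuous_finsetSum _ fun j _ => Continuous.smul ?_ (by fun_prop)
  exact (continuous_apply j).comp (continuous_subtype_val.comp continuous_fst)

lemma convexPosition_image_iff {ι : Type*} {d : ℕ} (x : ι → E d) (s : Finset ι) :
    ConvexPosition (x '' s) ↔
      ∀ i ∈ s, ∀ t ⊆ s, (∀ j ∈ t, x j ≠ x i) → x i ∉ convexHull ℝ (x '' t) := by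
  classical
  rw [ConvexPosition, forall_mem_image]
  refine forall₂_congr fun i _ => ⟨fun h t hts hne hmem => h ?_, fun h hmem => ?_⟩
  · refine convexHull_mono ?_ hmem
    rintro _ ⟨j, hj, rfl⟩
    exact ⟨mem_image_of_mem x (hts hj), hne j hj⟩
  · refine h (s.filter fun j => x j ≠ x i) (Finset.filter_subset _ _) (by simp) ?_
    refine convexHull_mono ?_ hmem
    rintro _ ⟨⟨j, hj, rfl⟩, hne⟩
    exact mem_image_of_mem x (by simpa using ⟨hj, hne⟩)

lemma measurableSet_convexPosition_image {ι : Type*} [Countable ι] (d : ℕ) (s : Finset ι) :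
    MeasurableSet {x : ι → E d | ConvexPosition (x '' s)} := by
  have measurable_ne (i j : ι) : Measurable fun x : ι → E d => x j ≠ x i :=
    (measurableSet_setOfPred.mp (measurableSet_eq_fun (by fun_prop) (by fun_prop))).not
  have measurable_notMem (i : ι) (t : Finset ι) :
      Measurable fun x : ι → E d => x i ∉ convexHull ℝ (x '' t) :=
    (measurableSet_setOfPred.mp (isClosed_setOf_mem_convexHull_image t i).measurableSet).not
  simp only [convexPosition_image_iff]
  refine measurableSet_setOfPred.mpr (.forall fun i => .forall fun _ => .forall fun t => ?_)
  exact .forall fun _ => .imp (.forall fun j => .forall fun _ => measurable_ne i j)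
    (measurable_notMem i t)

lemma numPolytopes_eq_sum_indicator (d n : ℕ) (x : Fin n → E d) :
    (numPolytopes d n x : ℝ) = ∑ s : Finset (Fin n) with 3 ≤ s.card,
      indicator {x : Fin n → E d | ConvexPosition (x '' s)} 1 x := by
  classical
  simp only [indicator_apply, mem_ofPred_eq, numPolytopes, Pi.one_apply]
  rw [Finset.sum_boole, Set.ncard_eq_toFinset_card', Finset.filter_filter]
  simp

lemma integrable_numPolytopes (d n : ℕ) (P : Measure (Fin n → E d)) [IsFiniteMeasure P] :
    Integrable (fun x => (numPolytopes d n x : ℝ)) P := by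
  simp only [numPolytopes_eq_sum_indicator]
  refine integrable_finsetSum _ fun s _ => ?_
  exact (integrable_const 1).indicator (measurableSet_convexPosition_image d s)

end Measurability

section AffineInvariance

lemma convexPosition_image_iff_of_injective {d e : ℕ} {f : E d →ᵃ[ℝ] E e}
    (hf : Function.Injective f) (X : Set (E d)) : ConvexPosition (f '' X) ↔ ConvexPosition X := by
  rw [ConvexPosition, ConvexPosition, forall_mem_image]
  refine forall₂_congr fun x _ => ?_
  rw [← image_singleton, ← image_sdiff hf, ← f.image_convexHull, hf.mem_set_image]

lemma integral_numPolytopes_map {d e n : ℕ} (μ : Measure (E d)) [IsProbabilityMeasure μ]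
    {f : E d →ᵃ[ℝ] E e} (hf : Function.Injective f) :
    ∫ x, (numPolytopes e n x : ℝ) ∂(Measure.pi fun _ => μ.map f) =
      ∫ x, (numPolytopes d n x : ℝ) ∂(Measure.pi fun _ => μ) := by
  have f_measurable : Measurable f := f.continuous_of_finiteDimensional.measurable
  have : IsProbabilityMeasure (μ.map f) :=
    Measure.isProbabilityMeasure_map f_measurable.aemeasurable
  have numPolytopes_comp (x : Fin n → E d) :
      numPolytopes e n (fun i => f (x i)) = numPolytopes d n x := by
    simp only [numPolytopes, ← Function.comp_def f x, image_comp,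
      convexPosition_image_iff_of_injective hf]
  rw [← Measure.pi_map_pi (μ := fun _ : Fin n => μ) (fun _ => f_measurable.aemeasurable),
    integral_map]
  · simp only [numPolytopes_comp]
  · exact (measurable_pi_lambda _ fun i =>
      f_measurable.comp (measurable_pi_apply i)).aemeasurable
  · exact (integrable_numPolytopes e n _).aestronglyMeasurable

lemma addHaar_image_affineEquiv {V : Type*} [NormedAddCommGroup V] [NormedSpace ℝ V]
    [MeasurableSpace V] [BorelSpace V] [FiniteDimensional ℝ V] (μ : Measure V) [μ.IsAddHaarMeasure]
    (T : V ≃ᵃ[ℝ] V) (S : Set V) :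
    μ (T '' S) = ENNReal.ofReal |LinearMap.det (T.linear : V →ₗ[ℝ] V)| * μ S := by
  have decomp : (T : V → V) = (fun y => y + T 0) ∘ (T.linear : V →ₗ[ℝ] V) := T.toAffineMap.decomp
  rw [decomp, image_comp, image_add_right, measure_preimage_add_right,
    Measure.addHaar_image_linearMap]

lemma unifOn_image_affineEquiv {d : ℕ} (T : E d ≃ᵃ[ℝ] E d) (K : Set (E d)) :
    unifOn d (T '' K) = (unifOn d K).map T := by
  have T_embedding : MeasurableEmbedding T :=
    (AffineEquiv.toContinuousAffineEquiv T).toHomeomorph.measurableEmbedding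
  set c := ENNReal.ofReal |LinearMap.det (T.linear : E d →ₗ[ℝ] E d)|
  have c_ne_zero : c ≠ 0 := by
    simpa [c] using T.linear.isUnit_det'.ne_zero
  have c_ne_top : c ≠ ⊤ := ENNReal.ofReal_ne_top
  ext S hS
  rw [T_embedding.map_apply, unifOn, unifOn, Measure.smul_apply, Measure.smul_apply,
    Measure.restrict_apply hS, Measure.restrict_apply (T_embedding.measurable hS),
    ← image_preimage_inter, addHaar_image_affineEquiv, addHaar_image_affineEquiv,
    smul_eq_mul, smul_eq_mul, ENNReal.mul_inv (.inl c_ne_zero) (.inl c_ne_top),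
    mul_mul_mul_comm, ENNReal.inv_mul_cancel c_ne_zero c_ne_top, one_mul]

end AffineInvariance

section Normalization

open scoped Pointwise

lemma continuous_basis_det {ι V : Type*} [Fintype ι] [DecidableEq ι] [NormedAddCommGroup V]
    [NormedSpace ℝ V] (e : Module.Basis ι ℝ V) : Continuous e.det := by
  have := e.finiteDimensional_of_finite
  simp only [funext e.det_apply]
  refine Continuous.matrix_det (continuous_matrix fun i j => ?_)
  exact (e.coord i).continuous_of_finiteDimensional.comp (continuous_apply j)

-- The basis maximises the absolute determinant among the families in `D` (Auerbach's lemma).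
lemma exists_basis_forall_abs_repr_le_one {ι V : Type*} [Finite ι] [NormedAddCommGroup V]
    [NormedSpace ℝ V] (e₀ : Module.Basis ι ℝ V) {D : Set V} (hD : IsCompact D)
    (hspan : Submodule.span ℝ D = ⊤) :
    ∃ b : Module.Basis ι ℝ V, (∀ i, b i ∈ D) ∧ ∀ x ∈ D, ∀ i, |b.repr x i| ≤ 1 := by
  classical
  have := Fintype.ofFinite ι
  obtain ⟨e, he⟩ : ∃ e : Module.Basis ι ℝ V, ∀ i, e i ∈ D := by
    let e := Module.Basis.ofSpan hspan.ge
    refine ⟨e.reindex (e.indexEquiv e₀), fun i => ?_⟩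
    rw [Module.Basis.reindex_apply]
    exact Module.Basis.ofSpan_subset hspan.ge ⟨_, rfl⟩
  obtain ⟨v, hv, hmax⟩ := (isCompact_univ_pi fun _ : ι => hD).exists_isMaxOn
    ⟨e, fun i _ => he i⟩ (continuous_basis_det e).abs.continuousOn
  have det_pos : 0 < |e.det v| := by
    have one_le : |e.det e| ≤ |e.det v| := hmax fun i _ => he i
    rw [e.det_self, abs_one] at one_le
    exact one_pos.trans_le one_le
  obtain ⟨hli, hsp⟩ := e.is_basis_iff_det.mpr (abs_pos.mp det_pos).isUnit
  refine ⟨Module.Basis.mk hli hsp.ge, fun i => ?_, fun x hx i => ?_⟩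
  · rw [Module.Basis.mk_apply]
    exact hv i (mem_univ i)
  · have cramer : e.det v * (Module.Basis.mk hli hsp.ge).repr x i =
        e.det (Function.update v i x) :=
      congrArg (fun f => f x) (e.det_smul_mk_coord_eq_det_update hli hsp.ge i)
    have update_mem : Function.update v i x ∈ univ.pi fun _ : ι => D :=
      (update_mem_pi_iff_of_mem hv).mpr fun _ => hx
    have det_update_le : |e.det (Function.update v i x)| ≤ |e.det v| := hmax update_mem
    rw [← cramer, abs_mul] at det_update_le
    exact le_of_mul_le_mul_left (det_update_le.trans_eq (mul_one _).symm) det_pos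

lemma exists_forall_abs_repr_sub_le_imp_mem {ι V : Type*} [Fintype ι] [Nonempty ι]
    [AddCommGroup V] [Module ℝ V] (b : Module.Basis ι ℝ V) {K : Set V} (hK : Convex ℝ K)
    (hb : ∀ i, b i ∈ K - K) :
    ∃ c ∈ K, ∀ x, (∀ i, |b.repr (x - c) i| ≤ 1 / (2 * Fintype.card ι)) → x ∈ K := by
  choose p hp q hq hpq using hb
  set d : ℝ := (Fintype.card ι : ℝ)
  have d_pos : 0 < d := by positivity
  have average_mem (t : ι → ℝ) (ht : ∀ i, t i ∈ Icc 0 1) :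
      ∑ i, (1 / d) • (q i + t i • b i) ∈ K := by
    refine hK.sum_mem (fun _ _ => by positivity) ?_ fun i _ => ?_
    · simp [d]
    · rw [← hpq]
      exact hK.add_smul_sub_mem (hq i) (hp i) (ht i)
  refine ⟨_, average_mem (fun _ => 1 / 2) fun _ => by norm_num, fun x hx => ?_⟩
  set c := ∑ i, (1 / d) • (q i + (1 / 2 : ℝ) • b i)
  have x_eq : x = ∑ i, (1 / d) • (q i + (1 / 2 + d * b.repr (x - c) i) • b i) := by
    calc x = c + ∑ i, b.repr (x - c) i • b i := by rw [b.sum_repr, add_sub_cancel]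
      _ = _ := by
        rw [← Finset.sum_add_distrib]
        refine Finset.sum_congr rfl fun i _ => ?_
        rw [add_smul, ← add_assoc, smul_add _ (q i + _), smul_smul (1 / d), ← mul_assoc,
          one_div_mul_cancel d_pos.ne', one_mul]
  rw [x_eq]
  refine average_mem _ fun i => ?_
  have scaled_le : |d * b.repr (x - c) i| ≤ 1 / 2 := by
    rw [abs_mul, abs_of_pos d_pos]
    exact (mul_le_mul_of_nonneg_left (hx i) d_pos.le).trans_eq (by field_simp)
  rw [abs_le] at scaled_le
  constructor <;> linarith

/-- The closed cube `[-r, r]^d`. -/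
def cube (d : ℕ) (r : ℝ) : Set (E d) := {x | ∀ i, |x i| ≤ r}

lemma exists_affineEquiv_cube_subset_image_subset_cube {d : ℕ} [NeZero d] {K : Set (E d)}
    (hK : IsCompact K) (hconv : Convex ℝ K) (hint : (interior K).Nonempty) :
    ∃ T : E d ≃ᵃ[ℝ] E d, cube d (1 / (2 * d)) ⊆ T '' K ∧ T '' K ⊆ cube d 1 := by
  have span_eq_top : Submodule.span ℝ (K - K) = ⊤ := by
    refine Submodule.eq_top_of_nonempty_interior' _ (Nonempty.mono ?_ (hint.sub hint))
    calc interior K - interior K ⊆ interior K - K := sub_subset_sub_left interior_subset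
      _ ⊆ interior (K - K) := subset_interior_sub_left
      _ ⊆ _ := interior_mono Submodule.subset_span
  obtain ⟨b, hb, repr_le⟩ := exists_basis_forall_abs_repr_le_one
    (EuclideanSpace.basisFun (Fin d) ℝ).toBasis (sub_eq_add_neg K K ▸ hK.add hK.neg) span_eq_top
  obtain ⟨c, hc, mem_of_repr_le⟩ := exists_forall_abs_repr_sub_le_imp_mem b hconv hb
  rw [Fintype.card_fin] at mem_of_repr_le
  let T : E d ≃ᵃ[ℝ] E d := (AffineEquiv.vaddConst ℝ c).symm.trans
    (b.equivFun ≪≫ₗ (WithLp.linearEquiv 2 ℝ (Fin d → ℝ)).symm).toAffineEquiv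
  have T_apply (x : E d) (i : Fin d) : T x i = b.repr (x - c) i := rfl
  refine ⟨T, fun x hx => ⟨T.symm x, mem_of_repr_le _ fun i => ?_, T.apply_symm_apply x⟩, ?_⟩
  · rw [← T_apply, T.apply_symm_apply]
    exact hx i
  · rintro _ ⟨x, hx, rfl⟩ i
    rw [T_apply]
    exact repr_le _ (sub_mem_sub hx hc) i

end Normalization

section Charts

/-- The coordinates `(y, t)` of `ℝ^(m+1) = ℝ^m × ℝ` in which the graphs bounding a convex body are
written: `t` is the `e.1`-th coordinate up to the sign `e.2` and `y` consists of the others. -/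
def chart {m : ℕ} (e : Fin (m + 1) × ℤˣ) (x : E (m + 1)) : (Fin m → ℝ) × ℝ :=
  (fun j => x (e.1.succAbove j), ((e.2 : ℤ) : ℝ) * x e.1)

lemma measurePreserving_units_int_mul (u : ℤˣ) :
    MeasurePreserving (fun t : ℝ => ((u : ℤ) : ℝ) * t) := by
  rcases Int.units_eq_one_or u with rfl | rfl
  · simp only [Units.val_one, Int.cast_one, one_mul]
    exact MeasurePreserving.id volume
  · simpa using Measure.measurePreserving_neg (volume : Measure ℝ)

lemma measurePreserving_chart {m : ℕ} (e : Fin (m + 1) × ℤˣ) : MeasurePreserving (chart e) :=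
  ((MeasurePreserving.id volume).prod (measurePreserving_units_int_mul e.2)).comp
    (Measure.measurePreserving_swap.comp
      ((volume_preserving_piFinSuccAbove (fun _ => ℝ) e.1).comp
        (PiLp.volume_preserving_ofLp _)))

/-- The points `(y, t)` with `y ∈ A` whose height `t - f y` over the graph of `f` is in `I`. -/
def graphStrip {Y : Type*} (f : Y → ℝ) (A : Set Y) (I : Set ℝ) : Set (Y × ℝ) :=
  {p | p.1 ∈ A ∧ p.2 - f p.1 ∈ I}

variable {Y : Type*} [MeasurableSpace Y] {f : Y → ℝ} {A : Set Y} {I : Set ℝ}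

lemma measurableSet_graphStrip (hf : Measurable f) (hA : MeasurableSet A) (hI : MeasurableSet I) :
    MeasurableSet (graphStrip f A I) :=
  (measurable_fst hA).inter ((measurable_snd.sub (hf.comp measurable_fst)) hI)

lemma measure_graphStrip (ν : Measure Y) [SFinite ν] (hf : Measurable f) (hA : MeasurableSet A)
    (hI : MeasurableSet I) : (ν.prod volume) (graphStrip f A I) = ν A * volume I := by
  have shear : MeasurePreserving (fun p : Y × ℝ => (p.1, p.2 - f p.1))
      (ν.prod volume) (ν.prod volume) :=
    (MeasurePreserving.id ν).skew_product (measurable_snd.sub (hf.comp measurable_fst))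
      (ae_of_all _ fun y => (measurePreserving_sub_right volume (f y)).map_eq)
  rw [← Measure.prod_prod, ← shear.measure_preimage (hA.prod hI).nullMeasurableSet]
  rfl

end Charts

section EmbeddingCount

lemma convexPosition_range_of_separated {d : ℕ} {V : Type*} {x : V → E d} {H : V → Set (E d)}
    (H_convex : ∀ v, Convex ℝ (H v)) (notMem : ∀ v, x v ∉ H v)
    (mem : Pairwise fun v w => x w ∈ H v) : ConvexPosition (range x) := by
  rintro _ ⟨v, rfl⟩ hv
  refine notMem v (convexHull_min ?_ (H_convex v) hv)
  rintro _ ⟨⟨w, rfl⟩, hw⟩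
  exact mem fun hvw => hw (congrArg x hvw.symm)

lemma measure_pi_forall_embedding_mem {ι V Ω : Type*} [Fintype ι] [Fintype V] [MeasurableSpace Ω]
    (μ : Measure Ω) [IsProbabilityMeasure μ] (φ : V ↪ ι) (C : V → Set Ω) :
    Measure.pi (fun _ : ι => μ) {x | ∀ v, x (φ v) ∈ C v} = ∏ v, μ (C v) := by
  have pi_eq : {x : ι → Ω | ∀ v, x (φ v) ∈ C v} =
      ((Finset.univ.map φ : Finset ι) : Set ι).pi (Function.extend φ C fun _ => univ) := by
    ext x
    simp [φ.injective.extend_apply]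
  rw [pi_eq, Measure.pi_pi_finset, Finset.prod_map]
  simp only [φ.injective.extend_apply]

variable {d n : ℕ} {V : Type*} [Fintype V] {C : V → Set (E d)}

open Classical in
lemma card_embedding_le_numPolytopes (three_le : 3 ≤ Fintype.card V)
    (C_disjoint : Pairwise fun v w => Disjoint (C v) (C w))
    (C_convex : ∀ y : V → E d, (∀ v, y v ∈ C v) → ConvexPosition (range y)) (x : Fin n → E d) :
    (Finset.univ.filter fun φ : V ↪ Fin n => ∀ v, x (φ v) ∈ C v).card ≤ numPolytopes d n x := by
  rw [numPolytopes, ← Set.ncard_coe_finset]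
  refine Set.ncard_le_ncard_of_injOn (fun φ => Finset.univ.map φ) (fun φ hφ => ?_)
    (fun φ hφ ψ hψ heq => ?_) (toFinite _)
  · refine ⟨by simpa using three_le, ?_⟩
    simpa [← range_comp] using C_convex (x ∘ φ) (by simpa using hφ)
  · ext v : 1
    have hv : φ v ∈ Finset.univ.map ψ := by
      change Finset.univ.map φ = Finset.univ.map ψ at heq
      exact heq ▸ Finset.mem_map_of_mem φ (Finset.mem_univ v)
    obtain ⟨w, -, hw⟩ := Finset.mem_map.mp hv
    simp only [Finset.coe_filter, Finset.mem_univ, true_and, mem_ofPred_eq] at hφ hψ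
    have v_eq_w : v = w := by
      by_contra hne
      exact (C_disjoint hne).notMem_of_mem_left (hφ v) (hw ▸ hψ w)
    rw [← hw, v_eq_w]

lemma descFactorial_mul_pow_le_integral_numPolytopes (three_le : 3 ≤ Fintype.card V)
    (C_disjoint : Pairwise fun v w => Disjoint (C v) (C w))
    (C_convex : ∀ y : V → E d, (∀ v, y v ∈ C v) → ConvexPosition (range y))
    (C_measurable : ∀ v, MeasurableSet (C v)) (μ : Measure (E d)) [IsProbabilityMeasure μ]
    {p : ℝ} (p_nonneg : 0 ≤ p) (p_le : ∀ v, p ≤ μ.real (C v)) :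
    (n.descFactorial (Fintype.card V) : ℝ) * p ^ Fintype.card V ≤
      ∫ x, (numPolytopes d n x : ℝ) ∂(Measure.pi fun _ : Fin n => μ) := by
  classical
  set P := Measure.pi fun _ : Fin n => μ
  let A (φ : V ↪ Fin n) : Set (Fin n → E d) := {x | ∀ v, x (φ v) ∈ C v}
  have A_measurable (φ : V ↪ Fin n) : MeasurableSet (A φ) := by
    simp only [A, ofPred_forall]
    exact MeasurableSet.iInter fun v => measurable_pi_apply (φ v) (C_measurable v)
  have pow_le (φ : V ↪ Fin n) : p ^ Fintype.card V ≤ P.real (A φ) := by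
    rw [measureReal_def, measure_pi_forall_embedding_mem, ENNReal.toReal_prod,
      ← Finset.card_univ, ← Finset.prod_const]
    exact Finset.prod_le_prod (fun _ _ => p_nonneg) fun v _ => p_le v
  have A_integrable (φ : V ↪ Fin n) : Integrable ((A φ).indicator (1 : (Fin n → E d) → ℝ)) P :=
    (integrable_const 1).indicator (A_measurable φ)
  calc (n.descFactorial (Fintype.card V) : ℝ) * p ^ Fintype.card V
      = ∑ _φ : V ↪ Fin n, p ^ Fintype.card V := by simp [Fintype.card_embedding_eq]
    _ ≤ ∑ φ, P.real (A φ) := Finset.sum_le_sum fun φ _ => pow_le φ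
    _ = ∫ x, ∑ φ, (A φ).indicator (1 : (Fin n → E d) → ℝ) x ∂P := by
        rw [integral_finsetSum _ fun φ _ => A_integrable φ]
        exact Finset.sum_congr rfl fun φ _ => (integral_indicator_one (A_measurable φ)).symm
    _ ≤ ∫ x, (numPolytopes d n x : ℝ) ∂P := by
        refine integral_mono (integrable_finsetSum _ fun φ _ => A_integrable φ)
          (integrable_numPolytopes d n P) fun x => ?_
        simp only [indicator_apply, Pi.one_apply]
        rw [Finset.sum_boole, Nat.cast_le]
        exact card_embedding_le_numPolytopes three_le C_disjoint C_convex x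

end EmbeddingCount

section ParaboloidCaps

/-- The affine function whose graph is tangent at `c` to the paraboloid `t = ∑ j, (y j) ^ 2`. -/
def paraboloidTangent {m : ℕ} (c y : Fin m → ℝ) : ℝ := ∑ j, (2 * c j * y j - c j ^ 2)

/-- A cell on top of the paraboloid near the point above `c`. Cells with far apart centres are in
convex position, and the constants make the volume of a cell comparable to `η ^ (m + 2)`. -/
def cap {m : ℕ} (η : ℝ) (c : Fin m → ℝ) : Set (E (m + 1)) :=
  chart (0, 1) ⁻¹' graphStrip (paraboloidTangent c) (Metric.closedBall c η)
    (Icc (m * η ^ 2) (2 * m * η ^ 2))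

/-- The open half-space lying above `cap η c`. -/
def capHalfSpace {m : ℕ} (η : ℝ) (c : Fin m → ℝ) : Set (E (m + 1)) :=
  {x | 2 * m * η ^ 2 < (chart (0, 1) x).2 - paraboloidTangent c (chart (0, 1) x).1}

variable {m : ℕ} {η : ℝ}

lemma measurable_paraboloidTangent (c : Fin m → ℝ) : Measurable (paraboloidTangent c) := by
  unfold paraboloidTangent
  fun_prop

lemma measurableSet_cap (η : ℝ) (c : Fin m → ℝ) : MeasurableSet (cap η c) :=
  (measurePreserving_chart _).measurable <| measurableSet_graphStrip
    (measurable_paraboloidTangent c) Metric.isClosed_closedBall.measurableSet measurableSet_Icc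

lemma volume_cap (hη : 0 ≤ η) (c : Fin m → ℝ) :
    volume.real (cap η c) = (2 * η) ^ m * (m * η ^ 2) := by
  have strip_measurable := measurableSet_graphStrip (measurable_paraboloidTangent c)
    (Metric.isClosed_closedBall (x := c) (ε := η)).measurableSet
    (measurableSet_Icc (a := m * η ^ 2) (b := 2 * m * η ^ 2))
  rw [measureReal_def, cap,
    (measurePreserving_chart _).measure_preimage strip_measurable.nullMeasurableSet,
    Measure.volume_eq_prod, measure_graphStrip _ (measurable_paraboloidTangent c)
      Metric.isClosed_closedBall.measurableSet measurableSet_Icc,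
    Real.volume_pi_closedBall c hη, Real.volume_Icc, Fintype.card_fin,
    ← ENNReal.ofReal_mul (by positivity), ENNReal.toReal_ofReal]
  · ring
  · exact mul_nonneg (by positivity) (by nlinarith [show 0 ≤ m * η ^ 2 by positivity])

lemma convex_capHalfSpace (η : ℝ) (c : Fin m → ℝ) : Convex ℝ (capHalfSpace η c) := by
  have height_linear : IsLinearMap ℝ fun x : E (m + 1) => x 0 - ∑ j, 2 * c j * x j.succ := by
    refine ⟨fun x y => ?_, fun a x => ?_⟩
    · simp only [PiLp.add_apply, mul_add, Finset.sum_add_distrib]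
      ring
    · simp only [PiLp.smul_apply, smul_eq_mul, mul_sub, Finset.mul_sum, mul_left_comm]
  have eq_halfSpace : capHalfSpace η c =
      {x | 2 * m * η ^ 2 - ∑ j, c j ^ 2 < x 0 - ∑ j, 2 * c j * x j.succ} := by
    ext x
    simp only [capHalfSpace, chart, paraboloidTangent, mem_ofPred_eq, Finset.sum_sub_distrib,
      Units.val_one, Int.cast_one, one_mul, Fin.zero_succAbove]
    constructor <;> intro <;> linarith
  rw [eq_halfSpace]
  exact convex_halfSpace_gt height_linear _

lemma disjoint_cap_capHalfSpace (η : ℝ) (c : Fin m → ℝ) : Disjoint (cap η c) (capHalfSpace η c) :=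
  disjoint_left.mpr fun _ hx => not_lt.mpr hx.2.2

lemma paraboloidTangent_sub (c c' y : Fin m → ℝ) :
    paraboloidTangent c y - paraboloidTangent c' y =
      ∑ j, (y j - c' j) ^ 2 - ∑ j, (y j - c j) ^ 2 := by
  rw [paraboloidTangent, paraboloidTangent, ← Finset.sum_sub_distrib, ← Finset.sum_sub_distrib]
  exact Finset.sum_congr rfl fun j _ => by ring

lemma cap_subset_capHalfSpace (hη : 0 < η) {c c' : Fin m → ℝ} {j : Fin m}
    (hj : 4 * m * η ≤ |c j - c' j|) : cap η c' ⊆ capHalfSpace η c := by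
  intro x hx
  rw [capHalfSpace, mem_ofPred_eq]
  obtain ⟨y_mem, lower, -⟩ := hx
  generalize chart (0, 1) x = p at *
  have one_le_m : (1 : ℝ) ≤ m := by exact_mod_cast j.pos
  have dist_le (k : Fin m) : |p.1 k - c' k| ≤ η := (dist_le_pi_dist p.1 c' k).trans y_mem
  have sum_near : ∑ k, (p.1 k - c' k) ^ 2 ≤ m * η ^ 2 := by
    calc ∑ k, (p.1 k - c' k) ^ 2 ≤ ∑ _k : Fin m, η ^ 2 :=
          Finset.sum_le_sum fun k _ => sq_le_sq.mpr ((dist_le k).trans (le_abs_self η))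
      _ = m * η ^ 2 := by simp
  have far : 3 * m * η ≤ |p.1 j - c j| := by
    have triangle : |c j - c' j| ≤ |p.1 j - c j| + |p.1 j - c' j| := by
      rw [abs_sub_comm (p.1 j)]
      exact abs_sub_le _ _ _
    nlinarith [dist_le j]
  have sum_far : (3 * m * η) ^ 2 ≤ ∑ k, (p.1 k - c k) ^ 2 := by
    calc (3 * m * η) ^ 2 ≤ |p.1 j - c j| ^ 2 := by gcongr
      _ = (p.1 j - c j) ^ 2 := sq_abs _
      _ ≤ _ := Finset.single_le_sum (f := fun k => (p.1 k - c k) ^ 2)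
          (fun _ _ => sq_nonneg _) (Finset.mem_univ j)
  have two_mul_lt : 2 * m * η ^ 2 < (3 * m * η) ^ 2 := by
    nlinarith [show 0 < m * η ^ 2 by positivity]
  linarith [paraboloidTangent_sub c' c p.1]

lemma pairwise_cap_subset_capHalfSpace {Q : ℕ} (hη : 0 < η) :
    Pairwise fun v w : Fin m → Fin Q =>
      cap η (fun j => 4 * m * η * (w j : ℕ)) ⊆ capHalfSpace η (fun j => 4 * m * η * (v j : ℕ)) := by
  intro v w hvw
  obtain ⟨j, hj⟩ := Function.ne_iff.mp hvw
  refine cap_subset_capHalfSpace hη (j := j) ?_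
  have one_le_dist : (1 : ℝ) ≤ |((v j : ℕ) : ℝ) - (w j : ℕ)| := by
    have : (1 : ℤ) ≤ |((v j : ℕ) : ℤ) - (w j : ℕ)| :=
      Int.one_le_abs (sub_ne_zero.mpr fun h => hj (Fin.ext (by exact_mod_cast h)))
    exact_mod_cast this
  calc 4 * m * η ≤ 4 * m * η * |((v j : ℕ) : ℝ) - (w j : ℕ)| :=
        le_mul_of_one_le_right (by positivity) one_le_dist
    _ = |4 * m * η * (v j : ℕ) - 4 * m * η * (w j : ℕ)| := by
        rw [← mul_sub, abs_mul, abs_of_nonneg (show 0 ≤ 4 * m * η by positivity)]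

lemma abs_paraboloidTangent_le {s : ℝ} {c y : Fin m → ℝ} (hc : ∀ j, |c j| ≤ s)
    (hy : ∀ j, |y j| ≤ 2 * s) : |paraboloidTangent c y| ≤ m * (5 * s ^ 2) := by
  calc |paraboloidTangent c y| ≤ ∑ j, |2 * c j * y j - c j ^ 2| := Finset.abs_sum_le_sum_abs _ _
    _ ≤ ∑ _j : Fin m, 5 * s ^ 2 := by
        refine Finset.sum_le_sum fun j _ => ?_
        have s_nonneg : 0 ≤ s := (abs_nonneg _).trans (hc j)
        calc |2 * c j * y j - c j ^ 2| ≤ 2 * |c j| * |y j| + |c j| ^ 2 := by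
              refine (abs_sub _ _).trans_eq ?_
              rw [abs_mul, abs_mul, abs_two, abs_pow]
          _ ≤ 2 * s * (2 * s) + s ^ 2 := by gcongr <;> simp only [hc, hy]
          _ = 5 * s ^ 2 := by ring
    _ = m * (5 * s ^ 2) := by simp

lemma cap_subset_cube {r s : ℝ} (hη : 0 ≤ η) (hηs : η ≤ s) (hsr : 2 * s ≤ r)
    (hmsr : 7 * m * s ^ 2 ≤ r) {c : Fin m → ℝ} (hc : ∀ j, |c j| ≤ s) :
    cap η c ⊆ cube (m + 1) r := by
  rintro x ⟨y_mem, lower, upper⟩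
  have abs_le_two_mul (j : Fin m) : |(chart (0, 1) x).1 j| ≤ 2 * s := by
    have near : |(chart (0, 1) x).1 j - c j| ≤ η := (dist_le_pi_dist _ c j).trans y_mem
    linarith [abs_sub_abs_le_abs_sub ((chart (0, 1) x).1 j) (c j), hc j]
  refine Fin.cases ?_ (fun j => ?_)
  · have tangent_le := abs_le.mp (abs_paraboloidTangent_le hc abs_le_two_mul)
    have sq_le : m * η ^ 2 ≤ m * s ^ 2 := by gcongr
    have height_eq : (chart (0, 1) x).2 = x 0 := by simp [chart]
    rw [height_eq] at lower upper
    have : 0 ≤ m * η ^ 2 := by positivity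
    rw [abs_le]
    constructor <;> linarith
  · exact (abs_le_two_mul j).trans hsr

end ParaboloidCaps

section LowerBound

lemma eventually_exists_nat_pow_le_mul {k : ℕ} (hk : k ≠ 0) {a : ℝ} (ha : 0 < a) (q : ℕ) :
    ∀ᶠ n : ℕ in atTop, ∃ Q : ℕ, q ≤ Q ∧ (Q : ℝ) ^ k ≤ a * n ∧ a * n ≤ (2 * Q) ^ k := by
  have tendsto_root : Tendsto (fun n : ℕ => (a * n) ^ (k : ℝ)⁻¹) atTop atTop :=
    (tendsto_rpow_atTop (by positivity)).comp
      (tendsto_natCast_atTop_atTop.const_mul_atTop ha)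
  filter_upwards [tendsto_root.eventually_ge_atTop (max q 1)] with n root_ge
  obtain ⟨q_le_root, one_le_root⟩ := max_le_iff.mp root_ge
  have root_pow : ((a * n) ^ (k : ℝ)⁻¹) ^ k = a * n := Real.rpow_inv_natCast_pow (by positivity) hk
  refine ⟨⌊(a * n) ^ (k : ℝ)⁻¹⌋₊, Nat.le_floor q_le_root, ?_, ?_⟩
  · exact (pow_le_pow_left₀ (by positivity) (Nat.floor_le (by positivity)) k).trans_eq root_pow
  · have one_le_floor : (1 : ℝ) ≤ ⌊(a * n) ^ (k : ℝ)⁻¹⌋₊ := by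
      exact_mod_cast Nat.le_floor (by exact_mod_cast one_le_root)
    have root_lt := Nat.lt_floor_add_one ((a * n) ^ (k : ℝ)⁻¹)
    calc a * n = ((a * n) ^ (k : ℝ)⁻¹) ^ k := root_pow.symm
      _ ≤ (2 * ⌊(a * n) ^ (k : ℝ)⁻¹⌋₊) ^ k := by gcongr; linarith

lemma rpow_div_le_pow_of_le_pow {j k : ℕ} (hk : k ≠ 0) {x y : ℝ} (hx : 0 ≤ x) (hy : 0 ≤ y)
    (h : x ≤ y ^ k) : x ^ ((j : ℝ) / k) ≤ y ^ j := by
  calc x ^ ((j : ℝ) / k) ≤ (y ^ k) ^ ((j : ℝ) / k) := by gcongr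
    _ = y ^ j := by
        rw [← Real.rpow_natCast_mul hy, mul_div_cancel₀ _ (by exact_mod_cast hk), Real.rpow_natCast]

lemma exp_le_descFactorial_mul_pow {n M : ℕ} {p : ℝ} (hM : (M : ℝ) ≤ n / 2) (hp : 3 ≤ n / 2 * p) :
    Real.exp M ≤ n.descFactorial M * p ^ M := by
  have p_pos : 0 < p := by
    by_contra! p_nonpos
    nlinarith [n.cast_nonneg (α := ℝ)]
  have half_le : (n : ℝ) / 2 ≤ (n + 1 - M : ℕ) := by
    have M_le : M ≤ n + 1 := by
      have : (M : ℝ) ≤ n + 1 := by linarith [n.cast_nonneg (α := ℝ)]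
      exact_mod_cast this
    rw [Nat.cast_sub M_le]
    push_cast
    linarith
  have exp_one_le : Real.exp 1 ≤ n / 2 * p := by linarith [Real.exp_one_lt_d9]
  calc Real.exp M = Real.exp 1 ^ M := by rw [← Real.exp_nat_mul, mul_one]
    _ ≤ (n / 2 * p) ^ M := by gcongr
    _ = (n / 2 : ℝ) ^ M * p ^ M := mul_pow ..
    _ ≤ (n + 1 - M : ℕ) ^ M * p ^ M := by gcongr
    _ ≤ n.descFactorial M * p ^ M := by
        gcongr
        exact_mod_cast Nat.pow_sub_le_descFactorial n M

variable {m : ℕ} [NeZero m] {r s c : ℝ}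

lemma descFactorial_mul_pow_cap_le_integral_numPolytopes {Q : ℕ} (three_le : 3 ≤ Q) {η : ℝ}
    (hη : 0 < η) (grid_le : 4 * m * η * Q ≤ s) (hsr : 2 * s ≤ r) (hmsr : 7 * m * s ^ 2 ≤ r)
    (hc : 0 ≤ c) {μ : Measure (E (m + 1))} [IsProbabilityMeasure μ]
    (hμ : ∀ S ⊆ cube (m + 1) r, MeasurableSet S → c * volume.real S ≤ μ.real S) (n : ℕ) :
    n.descFactorial (Q ^ m) * (c * ((2 * η) ^ m * (m * η ^ 2))) ^ Q ^ m ≤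
      ∫ x, (numPolytopes (m + 1) n x : ℝ) ∂(Measure.pi fun _ : Fin n => μ) := by
  have one_le_m : (1 : ℝ) ≤ m := by exact_mod_cast NeZero.one_le
  have three_le' : (3 : ℝ) ≤ Q := by exact_mod_cast three_le
  let centre (v : Fin m → Fin Q) (j : Fin m) : ℝ := 4 * m * η * (v j : ℕ)
  have centre_le (v j) : |centre v j| ≤ s := by
    rw [abs_of_nonneg (by positivity)]
    refine le_trans ?_ grid_le
    simp only [centre]
    gcongr
    exact (v j).isLt.le
  have η_le : η ≤ s := by
    have : 1 ≤ (m : ℝ) * Q := by nlinarith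
    nlinarith
  have cap_subset (v) : cap η (centre v) ⊆ cube (m + 1) r :=
    cap_subset_cube hη.le η_le hsr hmsr (centre_le v)
  have separated : Pairwise fun v w => cap η (centre w) ⊆ capHalfSpace η (centre v) :=
    pairwise_cap_subset_capHalfSpace hη
  have card_eq : Fintype.card (Fin m → Fin Q) = Q ^ m := by simp
  rw [← card_eq]
  refine descFactorial_mul_pow_le_integral_numPolytopes (C := fun v => cap η (centre v)) ?_ ?_ ?_
    (fun v => measurableSet_cap η _) μ (by positivity) fun v => ?_
  · rw [card_eq]
    exact three_le.trans (Nat.le_self_pow (NeZero.ne m) Q)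
  · exact fun v w hvw => (disjoint_cap_capHalfSpace η _).mono_right (separated hvw)
  · exact fun y hy => convexPosition_range_of_separated (fun v => convex_capHalfSpace η (centre v))
      (fun v => disjoint_left.mp (disjoint_cap_capHalfSpace η _) (hy v))
      fun v w hvw => separated hvw (hy w)
  · rw [← volume_cap hη.le (centre v)]
    exact hμ _ (cap_subset v) (measurableSet_cap η _)

lemma half_pow_mul_rpow_div_mul_rpow_div_le {j k : ℕ} (hk : k ≠ 0) {a x y : ℝ} (ha : 0 ≤ a)
    (hx : 0 ≤ x) (hy : 0 ≤ y) (h : a * x ≤ (2 * y) ^ k) :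
    (1 / 2) ^ j * a ^ ((j : ℝ) / k) * x ^ ((j : ℝ) / k) ≤ y ^ j := by
  rw [mul_assoc, ← Real.mul_rpow ha hx]
  calc (1 / 2) ^ j * (a * x) ^ ((j : ℝ) / k) ≤ (1 / 2) ^ j * (2 * y) ^ j := by
        gcongr
        exact rpow_div_le_pow_of_le_pow hk (by positivity) (by positivity) h
    _ = y ^ j := by
        rw [← mul_pow]
        ring

lemma exists_pos_two_mul_le_and_mul_sq_le {a b : ℝ} (ha : 0 < a) (hb : 1 ≤ b) :
    ∃ s > 0, 2 * s ≤ a ∧ 7 * b * s ^ 2 ≤ a := by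
  have le_one := min_le_left 1 (a / (7 * b))
  have le_div := (le_div_iff₀ (by positivity)).mp (min_le_right 1 (a / (7 * b)))
  have pos : 0 < min 1 (a / (7 * b)) := by positivity
  exact ⟨_, pos, by nlinarith, by nlinarith⟩

lemma exists_eventually_exp_le_integral_numPolytopes (hr : 0 < r) (hc : 0 < c) :
    ∃ c₁ : ℝ, 0 < c₁ ∧ ∀ᶠ n : ℕ in atTop, ∀ (μ : Measure (E (m + 1))) [IsProbabilityMeasure μ],
      (∀ S ⊆ cube (m + 1) r, MeasurableSet S → c * volume.real S ≤ μ.real S) →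
        Real.exp (c₁ * (n : ℝ) ^ ((m : ℝ) / (m + 2))) ≤
          ∫ x, (numPolytopes (m + 1) n x : ℝ) ∂(Measure.pi fun _ : Fin n => μ) := by
  have one_le_m : (1 : ℝ) ≤ m := by exact_mod_cast NeZero.one_le
  obtain ⟨s, s_pos, hsr, hmsr⟩ := exists_pos_two_mul_le_and_mul_sq_le hr one_le_m
  set κ := c * 2 ^ m * m * (s / (4 * m)) ^ (m + 2) with κ_def
  have : 0 < κ := by positivity
  set a := min (κ / 6) (1 / 2)
  have a_pos : 0 < a := by positivity
  refine ⟨(1 / 2) ^ m * a ^ ((m : ℝ) / (m + 2)), by positivity, ?_⟩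
  filter_upwards [eventually_exists_nat_pow_le_mul (m + 1).succ_ne_zero a_pos 3]
    with n ⟨Q, three_le, le_mul, mul_le⟩ μ _ hμ
  have : (0 : ℝ) < Q := by exact_mod_cast (by lia : 0 < Q)
  have one_le_Q : (1 : ℝ) ≤ Q := by exact_mod_cast (by lia : 1 ≤ Q)
  have rate_le : (1 / 2) ^ m * a ^ ((m : ℝ) / (m + 2)) * n ^ ((m : ℝ) / (m + 2)) ≤ (Q ^ m : ℕ) := by
    exact_mod_cast half_pow_mul_rpow_div_mul_rpow_div_le (j := m) (m + 1).succ_ne_zero a_pos.le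
      n.cast_nonneg Q.cast_nonneg mul_le
  have pow_le_half : ((Q ^ m : ℕ) : ℝ) ≤ n / 2 := by
    push_cast
    calc (Q : ℝ) ^ m ≤ Q ^ (m + 2) := pow_le_pow_right₀ one_le_Q (by lia)
      _ ≤ a * n := le_mul
      _ ≤ 1 / 2 * n := by gcongr; exact min_le_right _ _
      _ = n / 2 := by ring
  have three_le_mul : 3 ≤ n / 2 * (κ / Q ^ (m + 2)) := by
    have : (Q : ℝ) ^ (m + 2) ≤ κ / 6 * n := le_mul.trans (by gcongr; exact min_le_left _ _)
    rw [mul_div_assoc', le_div_iff₀ (by positivity)]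
    linarith
  have volume_eq : c * ((2 * (s / (4 * m * Q))) ^ m * (m * (s / (4 * m * Q)) ^ 2)) =
      κ / Q ^ (m + 2) := by
    simp only [κ_def, mul_pow, div_pow, pow_add]
    field_simp
  calc _ ≤ Real.exp (Q ^ m : ℕ) := Real.exp_le_exp.mpr rate_le
    _ ≤ n.descFactorial (Q ^ m) * (κ / Q ^ (m + 2)) ^ Q ^ m :=
        exp_le_descFactorial_mul_pow pow_le_half three_le_mul
    _ ≤ _ := by
        rw [← volume_eq]
        exact descFactorial_mul_pow_cap_le_integral_numPolytopes three_le (by positivity)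
          (by field_simp; rfl) hsr hmsr hc.le hμ n

end LowerBound

section AlmostConvexSequences

/-- The integer sequences `a` of length `n + 1` obtained by rounding down convex sequences: the
increments may decrease by at most one per step. The sequences start in `[-b, b]` and have
increments in `[-l, l]`. -/
def almostConvexSeq (n b l : ℕ) : Set (Fin (n + 1) → ℤ) :=
  {a | |a 0| ≤ b ∧ (∀ j : Fin n, |a j.succ - a j.castSucc| ≤ l) ∧
    StrictMono fun j : Fin n => a j.succ - a j.castSucc + 2 * (j : ℕ)}

variable {n b l : ℕ}

lemma almostConvexSeq_eq_of_image_increments_eq {a a' : Fin (n + 1) → ℤ}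
    (ha : a ∈ almostConvexSeq n b l) (ha' : a' ∈ almostConvexSeq n b l) (zero_eq : a 0 = a' 0)
    (image_eq : (Finset.univ.image fun j : Fin n => a j.succ - a j.castSucc + 2 * (j : ℕ)) =
      Finset.univ.image fun j : Fin n => a' j.succ - a' j.castSucc + 2 * (j : ℕ)) : a = a' := by
  have increments_eq := (ha.2.2.range_inj ha'.2.2).mp <| by
    simpa using congrArg (fun s : Finset ℤ => (s : Set ℤ)) image_eq
  funext i
  induction i using Fin.induction with
  | zero => exact zero_eq
  | succ j ih => linarith [congrFun increments_eq j]

lemma finite_almostConvexSeq_and_ncard_le (n b l : ℕ) : (almostConvexSeq n b l).Finite ∧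
    (almostConvexSeq n b l).ncard ≤ (2 * b + 1) * 2 ^ (2 * (l + n) + 1) := by
  let code (a : Fin (n + 1) → ℤ) : ℤ × Finset ℤ :=
    (a 0, Finset.univ.image fun j : Fin n => a j.succ - a j.castSucc + 2 * (j : ℕ))
  let codes : Finset (ℤ × Finset ℤ) := Finset.Icc (-b : ℤ) b ×ˢ
    (Finset.Icc (-l : ℤ) (l + 2 * n)).powerset
  have mapsTo : MapsTo code (almostConvexSeq n b l) codes := by
    rintro a ⟨abs_zero_le, abs_increment_le, -⟩
    refine Finset.mem_coe.mpr (Finset.mem_product.mpr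
      ⟨Finset.mem_Icc.mpr (abs_le.mp abs_zero_le), ?_⟩)
    refine Finset.mem_powerset.mpr (Finset.image_subset_iff.mpr fun j _ => Finset.mem_Icc.mpr ?_)
    have := abs_le.mp (abs_increment_le j)
    have := j.isLt
    lia
  have injOn : InjOn code (almostConvexSeq n b l) := fun a ha a' ha' h =>
    almostConvexSeq_eq_of_image_increments_eq ha ha' (congrArg Prod.fst h) (congrArg Prod.snd h)
  refine ⟨Finite.of_injOn mapsTo injOn codes.finite_toSet, ?_⟩
  calc (almostConvexSeq n b l).ncard ≤ (codes : Set (ℤ × Finset ℤ)).ncard :=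
        ncard_le_ncard_of_injOn code mapsTo injOn
    _ = (2 * b + 1) * 2 ^ (2 * (l + n) + 1) := by
        rw [ncard_coe_finset, Finset.card_product, Finset.card_powerset, Int.card_Icc,
          Int.card_Icc]
        congr 2 <;> lia

lemma floor_mem_almostConvexSeq {φ : ℕ → ℝ} (abs_zero_le : |φ 0| ≤ b)
    (abs_increment_le : ∀ j, |φ (j + 1) - φ j| ≤ l)
    (midpoint_le : ∀ j, 2 * φ (j + 1) ≤ φ j + φ (j + 2)) (n : ℕ) :
    (fun j : Fin (n + 1) => ⌊φ j⌋) ∈ almostConvexSeq n b l := by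
  have increments_strictMono : StrictMono fun j : ℕ => ⌊φ (j + 1)⌋ - ⌊φ j⌋ + 2 * (j : ℤ) := by
    refine strictMono_nat_of_lt_succ fun j => ?_
    have : (2 * ⌊φ (j + 1)⌋ : ℝ) - 2 < ⌊φ j⌋ + ⌊φ (j + 2)⌋ := by
      linarith [midpoint_le j, Int.floor_le (φ (j + 1)), Int.lt_floor_add_one (φ j),
        Int.lt_floor_add_one (φ (j + 2))]
    have : 2 * ⌊φ (j + 1)⌋ - 2 < ⌊φ j⌋ + ⌊φ (j + 2)⌋ := by exact_mod_cast this
    push_cast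
    linarith
  refine ⟨?_, fun j => ?_, increments_strictMono.comp Fin.val_strictMono⟩
  · obtain ⟨lower, upper⟩ := abs_le.mp abs_zero_le
    exact abs_le.mpr ⟨Int.le_floor.mpr (by exact_mod_cast lower),
      by exact_mod_cast (Int.floor_le (φ 0)).trans upper⟩
  · obtain ⟨lower, upper⟩ := abs_le.mp (abs_increment_le j)
    have floor_lt : (⌊φ (j + 1)⌋ : ℝ) < ⌊φ j⌋ + l + 1 := by
      linarith [Int.floor_le (φ (j + 1)), Int.lt_floor_add_one (φ j)]
    have lt_floor : (⌊φ j⌋ : ℝ) < ⌊φ (j + 1)⌋ + l + 1 := by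
      linarith [Int.floor_le (φ j), Int.lt_floor_add_one (φ (j + 1))]
    norm_cast at floor_lt lt_floor
    simp only [Fin.val_succ, Fin.val_castSucc, abs_le]
    constructor <;> lia

end AlmostConvexSequences

section ConvexLipschitz

/-- The convex `L`-Lipschitz functions on `ℝ^m`, with the sup norm, which are bounded by `B` at
the origin. -/
def convexLipschitz (m L B : ℕ) : Set ((Fin m → ℝ) → ℝ) :=
  {f | ConvexOn ℝ univ f ∧ LipschitzWith L f ∧ |f 0| ≤ B}

/-- The point of the lattice `(1 / N) ℤ^m` with integer coordinates `v`. -/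
def gridPoint {m : ℕ} (N : ℕ) (v : Fin m → ℤ) : Fin m → ℝ := fun j => v j / N

variable {m L B N : ℕ}

lemma abs_sub_gridPoint_le {f : (Fin m → ℝ) → ℝ} (hf : f ∈ convexLipschitz m L B)
    {v w : Fin m → ℤ} {t : ℕ} (hvw : ∀ j, |v j - w j| ≤ t) :
    |f (gridPoint N v) - f (gridPoint N w)| ≤ L * (t / N) := by
  have dist_le : dist (gridPoint N v) (gridPoint N w) ≤ t / N := by
    refine (dist_pi_le_iff (by positivity)).mpr fun j => ?_
    rw [Real.dist_eq, gridPoint, gridPoint, ← sub_div, abs_div, Nat.abs_cast]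
    gcongr
    exact_mod_cast hvw j
  exact (hf.2.1.dist_le_mul _ _).trans (by gcongr; rfl)

lemma two_mul_le_add_of_gridPoint {f : (Fin m → ℝ) → ℝ} (hf : ConvexOn ℝ univ f)
    {u v w : Fin m → ℤ} (hv : 2 * v = u + w) :
    2 * f (gridPoint N v) ≤ f (gridPoint N u) + f (gridPoint N w) := by
  have midpoint : gridPoint N v = (1 / 2 : ℝ) • gridPoint N u + (1 / 2 : ℝ) • gridPoint N w := by
    funext j
    have : 2 * (v j : ℝ) = u j + w j := by exact_mod_cast congrFun hv j
    simp only [gridPoint, Pi.add_apply, Pi.smul_apply, smul_eq_mul]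
    linear_combination (1 / (2 * (N : ℝ))) * this
  have := hf.2 (mem_univ (gridPoint N u)) (mem_univ (gridPoint N w))
    (by norm_num : (0 : ℝ) ≤ 1 / 2) (by norm_num : (0 : ℝ) ≤ 1 / 2) (by norm_num)
  rw [← midpoint, smul_eq_mul, smul_eq_mul] at this
  linarith

lemma floor_line_mem_almostConvexSeq {k : ℕ} {f : (Fin (k + 1) → ℝ) → ℝ}
    (hf : f ∈ convexLipschitz (k + 1) L B) [NeZero N] {w : Fin k → ℤ} (hw : ∀ j, |w j| ≤ N + 1)
    (n : ℕ) :
    (fun i : Fin (n + 1) => ⌊(N : ℝ) ^ 2 * f (gridPoint N (Fin.cons ((i : ℕ) - (N + 1)) w))⌋) ∈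
      almostConvexSeq n ((B + 2 * L) * N ^ 2) (L * N) := by
  have N_ne_zero : (N : ℝ) ≠ 0 := NeZero.ne _
  have one_le_N : (1 : ℝ) ≤ N := by exact_mod_cast NeZero.one_le
  refine floor_mem_almostConvexSeq
    (φ := fun i => (N : ℝ) ^ 2 * f (gridPoint N (Fin.cons ((i : ℤ) - (N + 1)) w))) ?_ ?_ ?_ n
  · have near : |f (gridPoint N (Fin.cons (((0 : ℕ) : ℤ) - (N + 1)) w)) - f (gridPoint N 0)| ≤
        L * ((N + 1 : ℕ) / N) :=
      abs_sub_gridPoint_le hf <| Fin.cases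
        (by rw [Fin.cons_zero, Pi.zero_apply, abs_le]; constructor <;> lia) (by simpa)
    have gridPoint_zero : gridPoint N (0 : Fin (k + 1) → ℤ) = 0 := by ext; simp [gridPoint]
    rw [gridPoint_zero] at near
    generalize gridPoint N (Fin.cons (((0 : ℕ) : ℤ) - (N + 1)) w) = x at near ⊢
    have ratio_le : ((N + 1 : ℕ) : ℝ) / N ≤ 2 := by
      rw [div_le_iff₀ (by positivity)]
      push_cast
      linarith
    have height_le : |f x| ≤ B + 2 * L := by
      calc |f x| ≤ |f 0| + |f x - f 0| := by linarith [abs_sub_abs_le_abs_sub (f x) (f 0)]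
        _ ≤ B + L * 2 := add_le_add hf.2.2 (near.trans (by gcongr))
        _ = B + 2 * L := by ring
    rw [abs_mul, abs_pow, Nat.abs_cast, mul_comm, Nat.cast_mul, Nat.cast_pow]
    gcongr
    exact_mod_cast height_le
  · intro i
    rw [← mul_sub, abs_mul, abs_pow, Nat.abs_cast]
    refine (mul_le_mul_of_nonneg_left (abs_sub_gridPoint_le hf (t := 1) ?_)
      (by positivity)).trans_eq ?_
    · exact Fin.cases (by simp) (by simp)
    push_cast
    field_simp
  · intro i
    rw [← mul_add, mul_left_comm]
    gcongr
    refine two_mul_le_add_of_gridPoint hf.1 (funext (Fin.cases ?_ fun j => ?_))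
    · simp
      ring
    · simp [two_mul]

lemma ncard_almostConvexSeq_line_le (L B N : ℕ) [NeZero N] :
    (almostConvexSeq (2 * (N + 1)) ((B + 2 * L) * N ^ 2) (L * N)).ncard ≤
      2 ^ ((2 * B + 6 * L + 12) * N) := by
  have one_le_N : 1 ≤ N := NeZero.one_le
  have N_le : N ≤ 2 ^ N := Nat.lt_two_pow_self.le
  have const_le : 2 * B + 4 * L + 1 ≤ 2 ^ (2 * B + 4 * L + 1) := Nat.lt_two_pow_self.le
  calc (almostConvexSeq (2 * (N + 1)) ((B + 2 * L) * N ^ 2) (L * N)).ncard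
      ≤ (2 * ((B + 2 * L) * N ^ 2) + 1) * 2 ^ (2 * (L * N + 2 * (N + 1)) + 1) :=
        (finite_almostConvexSeq_and_ncard_le ..).2
    _ ≤ ((2 * B + 4 * L + 1) * N ^ 2) * 2 ^ (2 * (L * N + 2 * (N + 1)) + 1) := by
        gcongr
        nlinarith
    _ ≤ (2 ^ (2 * B + 4 * L + 1) * (2 ^ N) ^ 2) * 2 ^ (2 * (L * N + 2 * (N + 1)) + 1) := by
        gcongr
    _ = 2 ^ (2 * B + 4 * L + 1 + N * 2 + (2 * (L * N + 2 * (N + 1)) + 1)) := by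
        rw [← pow_mul, ← pow_add, ← pow_add]
    _ ≤ 2 ^ ((2 * B + 6 * L + 12) * N) := by
        gcongr
        · norm_num
        · nlinarith

/-- The heights `f` at the lattice points of the cube `[-(N + 1), N + 1]^(k + 1)`, in units of
`1 / N ^ 2` and rounded down, arranged in lines parallel to the first coordinate axis. -/
def lineCode {k : ℕ} (N : ℕ) (f : (Fin (k + 1) → ℝ) → ℝ) :
    Finset.Icc (fun _ : Fin k => -(N + 1 : ℤ)) (fun _ => N + 1) → Fin (2 * (N + 1) + 1) → ℤ :=
  fun w i => ⌊(N : ℝ) ^ 2 * f (gridPoint N (Fin.cons ((i : ℕ) - (N + 1)) w.1))⌋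

lemma card_Icc_const (m : ℕ) (a b : ℤ) :
    (Finset.Icc (fun _ : Fin m => a) (fun _ => b)).card = (b + 1 - a).toNat ^ m := by
  rw [Pi.card_Icc, Finset.prod_const, Finset.card_univ, Fintype.card_fin, Int.card_Icc]

lemma finite_image_lineCode_and_ncard_le (k L B N : ℕ) [NeZero N] :
    (lineCode N '' convexLipschitz (k + 1) L B).Finite ∧
      (lineCode N '' convexLipschitz (k + 1) L B).ncard ≤
        2 ^ ((2 * B + 6 * L + 12) * 5 ^ k * N ^ (k + 1)) := by
  have lines_finite :=
    (finite_almostConvexSeq_and_ncard_le (2 * (N + 1)) ((B + 2 * L) * N ^ 2) (L * N)).1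
  let codes : Finset (Finset.Icc (fun _ : Fin k => -(N + 1 : ℤ)) (fun _ => N + 1) →
    Fin (2 * (N + 1) + 1) → ℤ) := Fintype.piFinset fun _ => lines_finite.toFinset
  have image_subset : lineCode N '' convexLipschitz (k + 1) L B ⊆ codes := by
    rintro _ ⟨f, hf, rfl⟩
    refine Fintype.mem_piFinset.mpr fun w => lines_finite.mem_toFinset.mpr ?_
    have abs_le (j : Fin k) : |w.1 j| ≤ N + 1 :=
      have := Finset.mem_Icc.mp w.2
      abs_le.mpr ⟨this.1 j, this.2 j⟩
    exact floor_line_mem_almostConvexSeq hf abs_le _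
  refine ⟨codes.finite_toSet.subset image_subset, ?_⟩
  have one_le_N : 1 ≤ N := NeZero.one_le
  calc (lineCode N '' convexLipschitz (k + 1) L B).ncard ≤ codes.card := by
        rw [← ncard_coe_finset]
        exact ncard_le_ncard image_subset codes.finite_toSet
    _ = (almostConvexSeq (2 * (N + 1)) ((B + 2 * L) * N ^ 2) (L * N)).ncard ^ (2 * N + 3) ^ k := by
        rw [Fintype.card_piFinset, Finset.prod_const, Finset.card_univ,
          ← ncard_eq_toFinset_card _ lines_finite, Fintype.card_coe, card_Icc_const]
        congr 2
        lia
    _ ≤ (2 ^ ((2 * B + 6 * L + 12) * N)) ^ (2 * N + 3) ^ k := by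
        gcongr
        exact ncard_almostConvexSeq_line_le L B N
    _ ≤ (2 ^ ((2 * B + 6 * L + 12) * N)) ^ (5 * N) ^ k := by
        gcongr
        · exact Nat.one_le_two_pow
        · lia
    _ = 2 ^ ((2 * B + 6 * L + 12) * 5 ^ k * N ^ (k + 1)) := by
        rw [← pow_mul]
        ring_nf

lemma abs_sub_gridPoint_le_of_lineCode_eq {k : ℕ} [NeZero N] {f g : (Fin (k + 1) → ℝ) → ℝ}
    (hfg : lineCode N f = lineCode N g) {v : Fin (k + 1) → ℤ} (hv : ∀ j, |v j| ≤ N + 1) :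
    |f (gridPoint N v) - g (gridPoint N v)| ≤ 1 / N ^ 2 := by
  have v_zero := abs_le.mp (hv 0)
  obtain ⟨i, hi⟩ : ∃ i : Fin (2 * (N + 1) + 1), ((i : ℕ) : ℤ) - (N + 1) = v 0 :=
    ⟨⟨(v 0 + (N + 1)).toNat, by lia⟩, by simp; lia⟩
  have tail_mem : Fin.tail v ∈ Finset.Icc (fun _ : Fin k => -(N + 1 : ℤ)) (fun _ => N + 1) :=
    Finset.mem_Icc.mpr ⟨fun j => (abs_le.mp (hv j.succ)).1, fun j => (abs_le.mp (hv j.succ)).2⟩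
  have floor_eq := congrFun (congrFun hfg ⟨_, tail_mem⟩) i
  rw [lineCode, lineCode, hi, Fin.cons_self_tail] at floor_eq
  have := (Int.abs_sub_lt_one_of_floor_eq_floor floor_eq).le
  rw [← mul_sub, abs_mul, abs_pow, Nat.abs_cast] at this
  rwa [le_div_iff₀' (by have := NeZero.ne (N : ℝ); positivity)]

lemma exists_net_convexLipschitz (m L B : ℕ) [NeZero m] : ∃ C : ℕ, ∀ N ≠ 0,
    ∃ R : Finset ((Fin m → ℝ) → ℝ), ↑R ⊆ convexLipschitz m L B ∧ R.card ≤ 2 ^ (C * N ^ m) ∧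
      ∀ f ∈ convexLipschitz m L B, ∃ g ∈ R, ∀ v : Fin m → ℤ, (∀ j, |v j| ≤ N + 1) →
        |f (gridPoint N v) - g (gridPoint N v)| ≤ 1 / N ^ 2 := by
  obtain ⟨k, rfl⟩ := Nat.exists_eq_succ_of_ne_zero (NeZero.ne m)
  refine ⟨(2 * B + 6 * L + 12) * 5 ^ k, fun N N_ne_zero => ?_⟩
  have : NeZero N := ⟨N_ne_zero⟩
  obtain ⟨codes_finite, ncard_codes_le⟩ := finite_image_lineCode_and_ncard_le k L B N
  obtain ⟨R, R_subset, bijOn⟩ := exists_subset_bijOn (convexLipschitz (k + 1) L B) (lineCode N)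
  have R_finite : R.Finite := bijOn.finite_iff_finite.mpr codes_finite
  refine ⟨R_finite.toFinset, by simpa, ?_, fun f hf => ?_⟩
  · rwa [← ncard_eq_toFinset_card _ R_finite, ← bijOn.injOn.ncard_image, bijOn.image_eq]
  · obtain ⟨g, hg, code_eq⟩ := bijOn.surjOn (mem_image_of_mem _ hf)
    exact ⟨g, R_finite.mem_toFinset.mpr hg, fun v hv =>
      abs_sub_gridPoint_le_of_lineCode_eq code_eq.symm hv⟩

end ConvexLipschitz

section SecondDifferences

/-- The second difference of `f` at the lattice point `v` in the lattice direction `u`. -/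
def secondDiff {m : ℕ} (N : ℕ) (f : (Fin m → ℝ) → ℝ) (v u : Fin m → ℤ) : ℝ :=
  f (gridPoint N (v + u)) + f (gridPoint N (v - u)) - 2 * f (gridPoint N v)

/-- The lower corners of the lattice cells that make up the cube `[-1, 1]^m`. -/
def cellCorners (m N : ℕ) : Finset (Fin m → ℤ) := Finset.Icc (fun _ => -N) (fun _ => N - 1)

/-- The cell of the lattice `(1 / N) ℤ^m` with lower corner `v`. -/
def cell {m : ℕ} (N : ℕ) (v : Fin m → ℤ) : Set (Fin m → ℝ) :=
  Icc (gridPoint N v) (gridPoint N (v + 1))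

variable {m L B N : ℕ} {f g : (Fin m → ℝ) → ℝ}

lemma abs_sum_sub_sum_le {ι : Type*} {S S' W : Finset ι} (hS : W ⊆ S)
    (hS' : W ⊆ S') (card_eq : S.card = S'.card) {h : ι → ℝ} {C : ℝ} (hC : ∀ i, |h i| ≤ C) :
    |∑ i ∈ S, h i - ∑ i ∈ S', h i| ≤ 2 * C * (S.card - W.card) := by
  classical
  have remainder_le {T : Finset ι} (hT : W ⊆ T) : |∑ i ∈ T \ W, h i| ≤ C * (T.card - W.card) := by
    calc |∑ i ∈ T \ W, h i| ≤ ∑ i ∈ T \ W, |h i| := Finset.abs_sum_le_sum_abs _ _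
      _ ≤ (T \ W).card • C := Finset.sum_le_card_nsmul _ _ _ fun i _ => hC i
      _ = C * (T.card - W.card) := by
          rw [Finset.card_sdiff_of_subset hT, nsmul_eq_mul, Nat.cast_sub (Finset.card_le_card hT),
            mul_comm]
  rw [← Finset.sum_sdiff hS, ← Finset.sum_sdiff hS', add_sub_add_right_eq_sub]
  calc _ ≤ |∑ i ∈ S \ W, h i| + |∑ i ∈ S' \ W, h i| := abs_sub _ _
    _ ≤ C * (S.card - W.card) + C * (S'.card - W.card) :=
        add_le_add (remainder_le hS) (remainder_le hS')
    _ = 2 * C * (S.card - W.card) := by rw [← card_eq]; ring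

lemma card_cellCorners (m N : ℕ) : (cellCorners m N).card = (2 * N) ^ m := by
  rw [cellCorners, card_Icc_const]
  congr 1
  lia

lemma pow_sub_pow_sub_one_le {x : ℝ} (hx : 1 ≤ x) (m : ℕ) :
    x ^ m - (x - 1) ^ m ≤ m * x ^ m / x := by
  have x_ne_zero : x ≠ 0 := by positivity
  have bernoulli : 1 + m * -(1 / x) ≤ (1 + -(1 / x)) ^ m :=
    one_add_mul_le_pow (by linarith [(div_le_one (by positivity : 0 < x)).mpr hx]) m
  have factor : (x - 1) ^ m = x ^ m * (1 + -(1 / x)) ^ m := by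
    rw [← mul_pow]
    field_simp
    ring
  calc x ^ m - (x - 1) ^ m ≤ x ^ m - x ^ m * (1 + m * -(1 / x)) := by rw [factor]; gcongr
    _ = m * x ^ m / x := by ring

lemma secondDiff_nonneg (hf : ConvexOn ℝ univ f) (v u : Fin m → ℤ) : 0 ≤ secondDiff N f v u := by
  have := two_mul_le_add_of_gridPoint (N := N) hf (by ring : 2 * v = (v + u) + (v - u))
  rw [secondDiff]
  linarith

lemma sum_secondDiff_eq_sub (S : Finset (Fin m → ℤ)) (u : Fin m → ℤ) :
    ∑ v ∈ S, secondDiff N f v u =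
      ∑ v ∈ S, (f (gridPoint N (v + u)) - f (gridPoint N v)) -
        ∑ v ∈ S.map (Equiv.subRight u).toEmbedding,
          (f (gridPoint N (v + u)) - f (gridPoint N v)) := by
  rw [Finset.sum_map, ← Finset.sum_sub_distrib]
  refine Finset.sum_congr rfl fun v _ => ?_
  simp only [secondDiff, Equiv.coe_toEmbedding, Equiv.subRight_apply, sub_add_cancel]
  ring

lemma sum_secondDiff_le [NeZero N] (hf : f ∈ convexLipschitz m L B) {u : Fin m → ℤ}
    (hu : u ∈ Icc 0 1) :
    ∑ v ∈ cellCorners m N, secondDiff N f v u ≤ L * m * 2 ^ m * N ^ m / N ^ 2 := by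
  have one_le_N : (1 : ℝ) ≤ N := by exact_mod_cast NeZero.one_le
  let h (v : Fin m → ℤ) : ℝ := f (gridPoint N (v + u)) - f (gridPoint N v)
  let S := cellCorners m N
  let S' := S.map (Equiv.subRight u).toEmbedding
  let W : Finset (Fin m → ℤ) := Finset.Icc (fun _ => -N) (fun _ => N - 2)
  have W_subset : W ⊆ S := Finset.Icc_subset_Icc le_rfl fun _ => by simp
  have W_subset' : W ⊆ S' := fun v hv => by
    obtain ⟨lower, upper⟩ := Finset.mem_Icc.mp hv
    refine Finset.mem_map.mpr ⟨v + u, Finset.mem_Icc.mpr ⟨fun j => ?_, fun j => ?_⟩, by simp⟩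
    · exact le_add_of_le_of_nonneg (lower j) (hu.1 j)
    · linarith [upper j, hu.2 j, Pi.add_apply v u j, Pi.one_apply (M := fun _ => ℤ) j]
  have abs_h_le (v) : |h v| ≤ L * (1 / N) := by
    refine (abs_sub_gridPoint_le hf (t := 1) fun j => ?_).trans_eq (by simp)
    simpa [abs_of_nonneg (hu.1 j)] using hu.2 j
  have card_W : (W.card : ℝ) = (2 * N - 1) ^ m := by
    have one_le : 1 ≤ 2 * N := by linarith [NeZero.one_le (n := N)]
    rw [card_Icc_const, show (N - 2 + 1 - -N : ℤ).toNat = 2 * N - 1 by lia, Nat.cast_pow,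
      Nat.cast_sub one_le, Nat.cast_mul, Nat.cast_ofNat, Nat.cast_one]
  calc ∑ v ∈ S, secondDiff N f v u ≤ 2 * (L * (1 / N)) * (S.card - W.card) := by
        rw [sum_secondDiff_eq_sub]
        exact (le_abs_self _).trans (abs_sum_sub_sum_le W_subset W_subset' (by simp [S']) abs_h_le)
    _ ≤ 2 * (L * (1 / N)) * (m * (2 * N) ^ m / (2 * N)) := by
        rw [card_cellCorners, card_W]
        push_cast
        gcongr
        exact pow_sub_pow_sub_one_le (by linarith) m
    _ = L * m * 2 ^ m * N ^ m / N ^ 2 := by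
        rw [mul_pow]
        field_simp

lemma exists_le_corner_of_mem_cell {φ : (Fin m → ℝ) → ℝ} (hφ : ConvexOn ℝ univ φ)
    {v : Fin m → ℤ} {y : Fin m → ℝ} (hy : y ∈ cell N v) :
    ∃ u ∈ Finset.Icc 0 1, φ y ≤ φ (gridPoint N (v + u)) := by
  have cell_eq_convexHull : cell N v = convexHull ℝ
      (univ.pi fun j => {gridPoint N v j, gridPoint N (v + 1) j}) := by
    rw [convexHull_pi, cell, ← pi_univ_Icc]
    refine congrArg (univ.pi) (funext fun j => ?_)
    rw [convexHull_pair, segment_eq_Icc]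
    simp only [gridPoint, Pi.add_apply, Pi.one_apply]
    gcongr
    simp
  rw [cell_eq_convexHull] at hy
  obtain ⟨z, hz, le_z⟩ := hφ.exists_ge_of_mem_convexHull (subset_univ _) hy
  have exists_coord (j) : ∃ t ∈ Icc (0 : ℤ) 1, z j = (v j + t : ℤ) / N := by
    rcases hz j (mem_univ j) with h | h
    · exact ⟨0, by simp, by simpa [gridPoint] using h⟩
    · exact ⟨1, by simp, by simpa [gridPoint] using h⟩
  choose u hu z_eq using exists_coord
  refine ⟨u, Finset.mem_Icc.mpr ⟨fun j => (hu j).1, fun j => (hu j).2⟩, le_z.trans_eq ?_⟩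
  exact congrArg φ (funext z_eq)

lemma exists_sub_le_of_mem_cell (hf : ConvexOn ℝ univ f) (hg : ConvexOn ℝ univ g)
    {v : Fin m → ℤ} {y : Fin m → ℝ} (hy : y ∈ cell N v) :
    ∃ u ∈ Finset.Icc 0 1, f y - g y ≤
      f (gridPoint N (v + u)) + g (gridPoint N (v - u)) - 2 * g (gridPoint N v) := by
  set p := gridPoint N v
  let reflection : (Fin m → ℝ) →ᵃ[ℝ] (Fin m → ℝ) := AffineEquiv.pointReflection ℝ p
  have convexOn_add : ConvexOn ℝ univ (f + g ∘ reflection) := hf.add (hg.comp_affineMap reflection)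
  obtain ⟨u, hu, le_corner⟩ := exists_le_corner_of_mem_cell convexOn_add hy
  have reflection_corner : reflection (gridPoint N (v + u)) = gridPoint N (v - u) := by
    simp only [reflection, AffineEquiv.coe_coe, AffineEquiv.pointReflection_apply]
    ext j
    simp only [p, gridPoint, vsub_eq_sub, vadd_eq_add, Pi.add_apply, Pi.sub_apply, Int.cast_add,
      Int.cast_sub]
    ring
  have midpoint : (1 / 2 : ℝ) • y + (1 / 2 : ℝ) • reflection y = p := by
    simp only [reflection, AffineEquiv.coe_coe, AffineEquiv.pointReflection_apply, vsub_eq_sub,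
      vadd_eq_add]
    module
  have midpoint_le : 2 * g p ≤ g y + g (reflection y) := by
    have := hg.2 (mem_univ y) (mem_univ (reflection y)) (by norm_num : (0 : ℝ) ≤ 1 / 2)
      (by norm_num : (0 : ℝ) ≤ 1 / 2) (by norm_num)
    rw [midpoint, smul_eq_mul, smul_eq_mul] at this
    linarith
  rw [Pi.add_apply, Pi.add_apply, Function.comp_apply, Function.comp_apply, reflection_corner]
    at le_corner
  exact ⟨u, hu, by linarith⟩

lemma abs_sub_le_of_mem_cell (hf : ConvexOn ℝ univ f) (hg : ConvexOn ℝ univ g) {δ : ℝ}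
    {v : Fin m → ℤ} (hv : v ∈ cellCorners m N)
    (hfg : ∀ w : Fin m → ℤ, (∀ j, |w j| ≤ N + 1) →
      |f (gridPoint N w) - g (gridPoint N w)| ≤ δ) {y : Fin m → ℝ} (hy : y ∈ cell N v) :
    |f y - g y| ≤ 3 * δ + ∑ u ∈ Finset.Icc 0 1, secondDiff N g v u := by
  have corner_bounds (w : Fin m → ℤ) (hw : ∀ j, |w j - v j| ≤ 1) :=
    abs_le.mp (hfg w fun j => by
      have lower := (Finset.mem_Icc.mp hv).1 j
      have upper := (Finset.mem_Icc.mp hv).2 j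
      have := abs_le.mp (hw j)
      exact abs_le.mpr ⟨by lia, by lia⟩)
  have bounds_v := corner_bounds v (by simp)
  have corner_le {u : Fin m → ℤ} (hu : u ∈ Finset.Icc 0 1) (j : Fin m) : |u j| ≤ 1 := by
    obtain ⟨u_nonneg, u_le⟩ := Finset.mem_Icc.mp hu
    exact (abs_of_nonneg (u_nonneg j)).trans_le (u_le j)
  have le_sum {u : Fin m → ℤ} (hu : u ∈ Finset.Icc 0 1) :=
    Finset.single_le_sum (fun u _ => secondDiff_nonneg (N := N) hg v u) hu
  have bounds_add {u : Fin m → ℤ} (hu : u ∈ Finset.Icc 0 1) :=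
    corner_bounds (v + u) (by simpa using corner_le hu)
  have bounds_sub {u : Fin m → ℤ} (hu : u ∈ Finset.Icc 0 1) :=
    corner_bounds (v - u) (by simpa using corner_le hu)
  rw [abs_le]
  constructor
  · obtain ⟨u, hu, sub_le⟩ := exists_sub_le_of_mem_cell hg hf hy
    have := le_sum hu
    rw [secondDiff] at this
    linarith [bounds_v.1, (bounds_sub hu).2]
  · obtain ⟨u, hu, sub_le⟩ := exists_sub_le_of_mem_cell hf hg hy
    have := le_sum hu
    rw [secondDiff] at this
    linarith [bounds_v.1, (bounds_add hu).2]

end SecondDifferences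

section Strips

/-- A bound for the distance over the cell with lower corner `v` between `f` and any convex
function whose values at lattice points differ from those of `f` by at most `1 / N ^ 2`. -/
def stripHalfWidth {m : ℕ} (N : ℕ) (f : (Fin m → ℝ) → ℝ) (v : Fin m → ℤ) : ℝ :=
  3 / N ^ 2 + ∑ u ∈ Finset.Icc 0 1, secondDiff N f v u

/-- A neighbourhood of the graph of `f` over `[-1, 1]^m`, which contains the graphs of all convex
functions whose values at lattice points differ from those of `f` by at most `1 / N ^ 2`. -/
def strip {m : ℕ} (N : ℕ) (f : (Fin m → ℝ) → ℝ) : Set ((Fin m → ℝ) × ℝ) :=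
  ⋃ v ∈ cellCorners m N,
    graphStrip f (cell N v) (Icc (-stripHalfWidth N f v) (stripHalfWidth N f v))

variable {m L B N : ℕ} {f g : (Fin m → ℝ) → ℝ}

lemma measurableSet_cell (N : ℕ) (v : Fin m → ℤ) : MeasurableSet (cell N v) :=
  measurableSet_Icc

lemma measurableSet_strip (hf : Measurable f) : MeasurableSet (strip N f) :=
  Finset.measurableSet_biUnion _ fun _ _ =>
    measurableSet_graphStrip hf (measurableSet_cell N _) measurableSet_Icc

lemma volume_cell (N : ℕ) (v : Fin m → ℤ) : volume (cell N v) = ENNReal.ofReal ((1 / N) ^ m) := by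
  have side_eq (j : Fin m) : gridPoint N (v + 1) j - gridPoint N v j = 1 / N := by
    simp only [gridPoint, Pi.add_apply, Pi.one_apply, Int.cast_add, Int.cast_one]
    ring
  rw [cell, Real.volume_Icc_pi, ENNReal.ofReal_pow (by positivity)]
  simp only [side_eq, Finset.prod_const, Finset.card_univ, Fintype.card_fin]

lemma stripHalfWidth_nonneg (hf : ConvexOn ℝ univ f) (v : Fin m → ℤ) :
    0 ≤ stripHalfWidth N f v :=
  add_nonneg (by positivity) (Finset.sum_nonneg fun _ _ => secondDiff_nonneg hf v _)

lemma sum_stripHalfWidth_le [NeZero N] (hf : f ∈ convexLipschitz m L B) :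
    ∑ v ∈ cellCorners m N, stripHalfWidth N f v ≤
      (3 * 2 ^ m + L * m * 4 ^ m) * N ^ m / N ^ 2 := by
  have card_directions : (Finset.Icc (0 : Fin m → ℤ) 1).card = 2 ^ m := card_Icc_const m 0 1
  calc ∑ v ∈ cellCorners m N, stripHalfWidth N f v
      = (2 * N) ^ m * (3 / N ^ 2) +
          ∑ u ∈ Finset.Icc 0 1, ∑ v ∈ cellCorners m N, secondDiff N f v u := by
        simp only [stripHalfWidth]
        rw [Finset.sum_add_distrib, Finset.sum_const, card_cellCorners, Finset.sum_comm,
          nsmul_eq_mul]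
        push_cast
        rfl
    _ ≤ (2 * N) ^ m * (3 / N ^ 2) +
          ∑ _u ∈ Finset.Icc (0 : Fin m → ℤ) 1, (L * m * 2 ^ m * N ^ m / N ^ 2 : ℝ) := by
        gcongr with u hu
        exact sum_secondDiff_le hf (Finset.mem_Icc.mp hu)
    _ = (3 * 2 ^ m + L * m * 4 ^ m) * N ^ m / N ^ 2 := by
        rw [Finset.sum_const, card_directions, nsmul_eq_mul, show (4 : ℝ) = 2 * 2 by norm_num]
        simp only [mul_pow]
        push_cast
        ring

lemma volume_strip_le [NeZero N] (hf : f ∈ convexLipschitz m L B) :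
    volume (strip N f) ≤ ENNReal.ofReal ((6 * 2 ^ m + 2 * L * m * 4 ^ m) / N ^ 2) := by
  have f_measurable : Measurable f := hf.2.1.continuous.measurable
  have width_nonneg (v) : 0 ≤ 2 * stripHalfWidth N f v :=
    mul_nonneg two_pos.le (stripHalfWidth_nonneg hf.1 v)
  calc volume (strip N f)
      ≤ ∑ v ∈ cellCorners m N, volume
          (graphStrip f (cell N v) (Icc (-stripHalfWidth N f v) (stripHalfWidth N f v))) :=
        measure_biUnion_finset_le _ _
    _ = ∑ v ∈ cellCorners m N, ENNReal.ofReal ((1 / N) ^ m * (2 * stripHalfWidth N f v)) := by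
        refine Finset.sum_congr rfl fun v _ => ?_
        rw [Measure.volume_eq_prod, measure_graphStrip _ f_measurable (measurableSet_cell N v)
          measurableSet_Icc, volume_cell, Real.volume_Icc, ENNReal.ofReal_mul (by positivity)]
        congr 2
        ring
    _ = ENNReal.ofReal ((1 / N) ^ m * (2 * ∑ v ∈ cellCorners m N, stripHalfWidth N f v)) := by
        rw [← ENNReal.ofReal_sum_of_nonneg fun v _ => mul_nonneg (by positivity) (width_nonneg v),
          ← Finset.mul_sum, ← Finset.mul_sum]
    _ ≤ _ := by
        refine ENNReal.ofReal_le_ofReal ?_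
        have N_ne_zero : (N : ℝ) ≠ 0 := NeZero.ne _
        calc _ ≤ (1 / N : ℝ) ^ m * (2 * ((3 * 2 ^ m + L * m * 4 ^ m) * N ^ m / N ^ 2)) := by
              gcongr
              exact sum_stripHalfWidth_le hf
          _ = _ := by
              rw [one_div, inv_pow]
              field_simp
              ring

lemma exists_mem_cell [NeZero N] {y : Fin m → ℝ} (hy : ∀ j, |y j| ≤ 1) :
    ∃ v ∈ cellCorners m N, y ∈ cell N v := by
  have N_pos : (0 : ℝ) < N := by exact_mod_cast NeZero.pos N
  have coord_bounds (j) : -(N : ℝ) ≤ N * y j ∧ N * y j ≤ N := by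
    obtain ⟨lower, upper⟩ := abs_le.mp (hy j)
    constructor <;> nlinarith
  -- The minimum puts the points with a coordinate equal to `1` into a cell inside the cube.
  refine ⟨fun j => min ⌊N * y j⌋ (N - 1), Finset.mem_Icc.mpr ⟨fun j => le_min ?_ ?_, fun j =>
    min_le_right _ _⟩, fun j => ?_, fun j => ?_⟩
  · exact Int.le_floor.mpr (by exact_mod_cast (coord_bounds j).1)
  · linarith [NeZero.one_le (n := N)]
  · rw [gridPoint, div_le_iff₀' N_pos]
    exact (Int.cast_le.mpr (min_le_left _ _)).trans (Int.floor_le _)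
  · simp only [gridPoint, Pi.add_apply, Pi.one_apply, Int.cast_add, Int.cast_min, Int.cast_sub,
      Int.cast_natCast, Int.cast_one]
    rw [le_div_iff₀' N_pos, ← min_add_add_right, sub_add_cancel]
    exact le_min (Int.lt_floor_add_one _).le (coord_bounds j).2

lemma graph_mem_strip [NeZero N] (hf : ConvexOn ℝ univ f) (hg : ConvexOn ℝ univ g)
    (hfg : ∀ v : Fin m → ℤ, (∀ j, |v j| ≤ N + 1) →
      |f (gridPoint N v) - g (gridPoint N v)| ≤ 1 / N ^ 2)
    {y : Fin m → ℝ} (hy : ∀ j, |y j| ≤ 1) : (y, f y) ∈ strip N g := by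
  obtain ⟨v, hv, y_mem⟩ := exists_mem_cell (N := N) hy
  refine mem_iUnion₂.mpr ⟨v, hv, y_mem, abs_le.mp ?_⟩
  rw [stripHalfWidth, ← mul_one_div]
  exact abs_sub_le_of_mem_cell hf hg hv hfg y_mem

lemma exists_cover_graphs (m L B : ℕ) [NeZero m] : ∃ C A : ℕ, ∀ N ≠ 0,
    ∃ 𝒮 : Finset (Set ((Fin m → ℝ) × ℝ)), 𝒮.card ≤ 2 ^ (C * N ^ m) ∧
      (∀ S ∈ 𝒮, MeasurableSet S ∧ volume S ≤ ENNReal.ofReal (A / N ^ 2)) ∧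
      ∀ f ∈ convexLipschitz m L B, ∃ S ∈ 𝒮, ∀ y, (∀ j, |y j| ≤ 1) → (y, f y) ∈ S := by
  classical
  obtain ⟨C, exists_net⟩ := exists_net_convexLipschitz m L B
  refine ⟨C, 6 * 2 ^ m + 2 * L * m * 4 ^ m, fun N N_ne_zero => ?_⟩
  have : NeZero N := ⟨N_ne_zero⟩
  obtain ⟨R, R_subset, card_le, close⟩ := exists_net N N_ne_zero
  refine ⟨R.image (strip N), Finset.card_image_le.trans card_le, ?_, fun f hf => ?_⟩
  · rw [Finset.forall_mem_image]
    refine fun g hg => ⟨measurableSet_strip (R_subset hg).2.1.continuous.measurable, ?_⟩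
    exact_mod_cast volume_strip_le (R_subset hg)
  · obtain ⟨g, hg, hfg⟩ := close f hf
    exact ⟨strip N g, Finset.mem_image_of_mem _ hg, fun y =>
      graph_mem_strip hf.1 (R_subset hg).1 hfg⟩

end Strips

section SupportFunctions

variable {m L B : ℕ}

lemma sup'_mem_convexLipschitz {ι : Type*} {P : Finset ι} (hP : P.Nonempty)
    {f : ι → (Fin m → ℝ) → ℝ} (hf : ∀ p ∈ P, f p ∈ convexLipschitz m L B) :
    P.sup' hP f ∈ convexLipschitz m L B := by
  refine Finset.sup'_induction hP f (fun f₁ h₁ f₂ h₂ => ⟨h₁.1.sup h₂.1, ?_, ?_⟩) hf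
  · exact max_self (L : NNReal) ▸ h₁.2.1.max h₂.2.1
  · exact abs_max_le_max_abs_abs.trans (max_le h₁.2.2 h₂.2.2)

lemma affine_mem_convexLipschitz {c : ℝ} {g : Fin m → ℝ} (hc : |c| ≤ B) (hg : ∀ j, |g j| ≤ 1) :
    (fun y => c + ∑ j, g j * y j) ∈ convexLipschitz m m B := by
  refine ⟨⟨convex_univ, fun y _ z _ a b _ _ hab => le_of_eq ?_⟩,
    LipschitzWith.of_le_add_mul _ fun y z => ?_, ?_⟩
  · simp only [Pi.add_apply, Pi.smul_apply, smul_eq_mul, mul_add, Finset.sum_add_distrib,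
      Finset.mul_sum, mul_left_comm (g _)]
    linear_combination -c * hab
  · have slope_le : ∑ j, g j * (y j - z j) ≤ ∑ _j : Fin m, dist y z := by
      refine Finset.sum_le_sum fun j _ => (le_abs_self _).trans ?_
      rw [abs_mul]
      exact (mul_le_of_le_one_left (abs_nonneg _) (hg j)).trans (dist_le_pi_dist y z j)
    simp only [mul_sub, Finset.sum_sub_distrib, Finset.sum_const, Finset.card_univ,
      Fintype.card_fin, nsmul_eq_mul] at slope_le
    rw [NNReal.coe_natCast]
    linarith
  · simpa using hc

lemma exists_mem_convexLipschitz_of_subgradients {ι : Type*} (P : Finset ι)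
    {y g : ι → Fin m → ℝ} {t : ι → ℝ} (hy : ∀ p ∈ P, ∀ j, |y p j| ≤ 1) (ht : ∀ p ∈ P, |t p| ≤ 1)
    (hg : ∀ p ∈ P, ∀ j, |g p j| ≤ 1)
    (le : ∀ p ∈ P, ∀ q ∈ P, t p + ∑ j, g p j * (y q j - y p j) ≤ t q) :
    ∃ f ∈ convexLipschitz m m (m + 1), ∀ p ∈ P, f (y p) = t p := by
  obtain rfl | hP := P.eq_empty_or_nonempty
  · exact ⟨_, affine_mem_convexLipschitz (c := 0) (g := 0) (abs_zero.trans_le (Nat.cast_nonneg _))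
      fun _ => abs_zero.trans_le zero_le_one, by simp⟩
  have intercept_le (p) (hp : p ∈ P) : |t p - ∑ j, g p j * y p j| ≤ (m + 1 : ℕ) := by
    have dot_le : |∑ j, g p j * y p j| ≤ ∑ _j : Fin m, 1 :=
      (Finset.abs_sum_le_sum_abs _ _).trans <| Finset.sum_le_sum fun j _ => by
        rw [abs_mul]
        exact mul_le_one₀ (hg p hp j) (abs_nonneg _) (hy p hp j)
    simp only [Finset.sum_const, Finset.card_univ, Fintype.card_fin, nsmul_eq_mul,
      mul_one] at dot_le
    push_cast
    linarith [abs_sub (t p) (∑ j, g p j * y p j), ht p hp]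
  refine ⟨_, sup'_mem_convexLipschitz hP fun p hp =>
    affine_mem_convexLipschitz (intercept_le p hp) (hg p hp), fun q hq => ?_⟩
  rw [Finset.sup'_apply]
  refine le_antisymm (Finset.sup'_le _ _ fun p hp => ?_) ?_
  · have := le p hp q hq
    simp only [mul_sub, Finset.sum_sub_distrib] at this
    linarith
  · refine le_trans (le_of_eq ?_) (Finset.le_sup' _ hq)
    ring

variable {X : Set (E (m + 1))} {p : E (m + 1)}

lemma exists_forall_inner_lt (hX : X.Finite) (hcp : ConvexPosition X) (hp : p ∈ X) :
    ∃ w : E (m + 1), ∀ q ∈ X \ {p}, ∑ i, w i * p i < ∑ i, w i * q i := by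
  have hull_closed : IsClosed (convexHull ℝ (X \ {p})) :=
    ((hX.subset sdiff_subset).isCompact_convexHull (𝕜 := ℝ)).isClosed
  obtain ⟨f, u, f_p_lt, lt_f⟩ :=
    geometric_hahn_banach_point_closed (convex_convexHull ℝ (X \ {p})) hull_closed (hcp p hp)
  refine ⟨(InnerProductSpace.toDual ℝ _).symm f, fun q hq => ?_⟩
  have f_eq (x) : f x = ∑ i, (InnerProductSpace.toDual ℝ _).symm f i * x i := by
    rw [← InnerProductSpace.toDual_symm_apply, PiLp.inner_apply]
    simp [mul_comm]
  rw [← f_eq, ← f_eq]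
  exact f_p_lt.trans (lt_f q (subset_convexHull ℝ _ hq))

lemma exists_chart_subgradient {w : E (m + 1)} (hw : w ≠ 0) :
    ∃ e : Fin (m + 1) × ℤˣ, ∃ g : Fin m → ℝ, (∀ j, |g j| ≤ 1) ∧
      ∀ q, ∑ i, w i * p i ≤ ∑ i, w i * q i →
        (chart e p).2 + ∑ j, g j * ((chart e q).1 j - (chart e p).1 j) ≤ (chart e q).2 := by
  obtain ⟨k, hk⟩ : ∃ k, w k ≠ 0 := by
    by_contra! h
    exact hw (PiLp.ext h)
  obtain ⟨i, -, hi⟩ := Finset.exists_max_image Finset.univ (fun i => |w i|) ⟨k, Finset.mem_univ k⟩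
  have w_i_pos : 0 < |w i| := (abs_pos.mpr hk).trans_le (hi k (Finset.mem_univ k))
  obtain ⟨u, hu⟩ : ∃ u : ℤˣ, w i = (u : ℤ) * |w i| := by
    rcases abs_choice (w i) with h | h
    · exact ⟨1, by simp [h]⟩
    · exact ⟨-1, by simp [h]⟩
  refine ⟨(i, u), fun j => -w (i.succAbove j) / |w i|, fun j => ?_, fun q hpq => ?_⟩
  · rw [abs_div, abs_neg, abs_abs]
    exact div_le_one_of_le₀ (hi _ (Finset.mem_univ _)) (abs_nonneg _)
  rw [Fin.sum_univ_succAbove _ i, Fin.sum_univ_succAbove _ i] at hpq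
  have slope_eq : |w i| * ∑ j, -w (i.succAbove j) / |w i| * (q (i.succAbove j) - p (i.succAbove j))
      = ∑ j, w (i.succAbove j) * p (i.succAbove j) -
        ∑ j, w (i.succAbove j) * q (i.succAbove j) := by
    rw [← Finset.sum_sub_distrib, Finset.mul_sum]
    refine Finset.sum_congr rfl fun j _ => ?_
    field_simp
    ring
  refine le_of_mul_le_mul_left ?_ w_i_pos
  simp only [chart, mul_add, slope_eq]
  linear_combination hpq + (q i - p i) * hu

lemma exists_chart_subgradient_of_convexPosition (hX : X.Finite) (hcp : ConvexPosition X)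
    (hp : p ∈ X) : ∃ e : Fin (m + 1) × ℤˣ, ∃ g : Fin m → ℝ, (∀ j, |g j| ≤ 1) ∧
      ∀ q ∈ X, (chart e p).2 + ∑ j, g j * ((chart e q).1 j - (chart e p).1 j) ≤ (chart e q).2 := by
  obtain ⟨w, hw⟩ := exists_forall_inner_lt hX hcp hp
  by_cases w_zero : w = 0
  · have eq_p (q) (hq : q ∈ X) : q = p := by
      by_contra hqp
      simpa [w_zero] using hw q ⟨hq, hqp⟩
    exact ⟨(0, 1), 0, by simp, fun q hq => by simp [eq_p q hq]⟩
  · obtain ⟨e, g, hg, le⟩ := exists_chart_subgradient (p := p) w_zero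
    refine ⟨e, g, hg, fun q hq => le q ?_⟩
    obtain rfl | hqp := eq_or_ne q p
    · rfl
    · exact (hw q ⟨hq, hqp⟩).le

lemma abs_chart_fst_le (e : Fin (m + 1) × ℤˣ) (hp : p ∈ cube (m + 1) 1) (j : Fin m) :
    |(chart e p).1 j| ≤ 1 :=
  hp _

lemma abs_chart_snd_le (e : Fin (m + 1) × ℤˣ) (hp : p ∈ cube (m + 1) 1) : |(chart e p).2| ≤ 1 := by
  rcases Int.units_eq_one_or e.2 with h | h <;> simpa [chart, h] using hp e.1

lemma exists_graphs_of_convexPosition (hX : X.Finite) (hcp : ConvexPosition X)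
    (hcube : X ⊆ cube (m + 1) 1) :
    ∃ f : Fin (m + 1) × ℤˣ → (Fin m → ℝ) → ℝ, (∀ e, f e ∈ convexLipschitz m m (m + 1)) ∧
      ∀ p ∈ X, ∃ e, f e (chart e p).1 = (chart e p).2 := by
  classical
  choose! e g hg le using fun p (hp : p ∈ X) => exists_chart_subgradient_of_convexPosition hX hcp hp
  have graph (a : Fin (m + 1) × ℤˣ) : ∃ f ∈ convexLipschitz m m (m + 1),
      ∀ p ∈ hX.toFinset.filter (e · = a), f (chart a p).1 = (chart a p).2 := by
    refine exists_mem_convexLipschitz_of_subgradients (g := g) _ ?_ ?_ ?_ ?_ <;>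
      simp only [Finset.mem_filter, Set.Finite.mem_toFinset, and_imp]
    · exact fun p hp _ => abs_chart_fst_le a (hcube hp)
    · exact fun p hp _ => abs_chart_snd_le a (hcube hp)
    · exact fun p hp _ => hg p hp
    · rintro p hp rfl q hq _
      exact le p hp q hq
  choose f hf eq using graph
  exact ⟨f, hf, fun p hp => ⟨e p, eq (e p) p (by simp [hp])⟩⟩

end SupportFunctions

section UpperBound

lemma exists_cover_convexPosition (m : ℕ) [NeZero m] : ∃ C A : ℕ, ∀ N ≠ 0,
    ∃ 𝓡 : Finset (Set (E (m + 1))), 𝓡.card ≤ 2 ^ (C * N ^ m) ∧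
      (∀ R ∈ 𝓡, MeasurableSet R ∧ volume R ≤ ENNReal.ofReal (A / N ^ 2)) ∧
      ∀ X ⊆ cube (m + 1) 1, X.Finite → ConvexPosition X → ∃ R ∈ 𝓡, X ⊆ R := by
  classical
  obtain ⟨C, A, exists_cover⟩ := exists_cover_graphs m m (m + 1)
  set k := Fintype.card (Fin (m + 1) × ℤˣ)
  refine ⟨k * C, k * A, fun N hN => ?_⟩
  obtain ⟨𝒮, card_le, h𝒮, cover⟩ := exists_cover N hN
  let union (S : Fin (m + 1) × ℤˣ → Set ((Fin m → ℝ) × ℝ)) : Set (E (m + 1)) :=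
    ⋃ e, chart e ⁻¹' S e
  refine ⟨(Fintype.piFinset fun _ => 𝒮).image union, ?_, ?_, fun X X_subset X_finite hX => ?_⟩
  · calc _ ≤ (Fintype.piFinset fun _ : Fin (m + 1) × ℤˣ => 𝒮).card := Finset.card_image_le
      _ = 𝒮.card ^ k := by rw [Fintype.card_piFinset, Finset.prod_const, Finset.card_univ]
      _ ≤ (2 ^ (C * N ^ m)) ^ k := by gcongr
      _ = 2 ^ (k * C * N ^ m) := by rw [← pow_mul, mul_comm _ k, ← mul_assoc]
  · rw [Finset.forall_mem_image]
    intro S hS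
    rw [Fintype.mem_piFinset] at hS
    refine ⟨.iUnion fun e => (measurePreserving_chart e).measurable (h𝒮 _ (hS e)).1, ?_⟩
    calc volume (union S) ≤ ∑ e, volume (chart e ⁻¹' S e) := measure_iUnion_fintype_le _ _
      _ = ∑ e, volume (S e) := Finset.sum_congr rfl fun e _ =>
          (measurePreserving_chart e).measure_preimage (h𝒮 _ (hS e)).1.nullMeasurableSet
      _ ≤ ∑ _e : Fin (m + 1) × ℤˣ, ENNReal.ofReal (A / N ^ 2) :=
          Finset.sum_le_sum fun e _ => (h𝒮 _ (hS e)).2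
      _ = ENNReal.ofReal ((k * A : ℕ) / N ^ 2) := by
          rw [Finset.sum_const, Finset.card_univ, ← ENNReal.ofReal_nsmul, nsmul_eq_mul,
            Nat.cast_mul, mul_div_assoc]
  · obtain ⟨f, hf, graph⟩ := exists_graphs_of_convexPosition X_finite hX X_subset
    choose S hS graph_subset using fun e => cover (f e) (hf e)
    refine ⟨union S, Finset.mem_image_of_mem _ (Fintype.mem_piFinset.mpr hS), fun p hp => ?_⟩
    obtain ⟨e, he⟩ := graph p hp
    refine mem_iUnion.mpr ⟨e, ?_⟩
    rw [mem_preimage, ← Prod.mk.eta (p := chart e p), ← he]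
    exact graph_subset e _ (abs_chart_fst_le e (X_subset hp))

variable {d n : ℕ}

lemma numPolytopes_le_sum_prod {D : Set (E d)} {𝓡 : Finset (Set (E d))}
    (cover : ∀ X ⊆ D, X.Finite → ConvexPosition X → ∃ R ∈ 𝓡, X ⊆ R) {x : Fin n → E d}
    (hx : ∀ i, x i ∈ D) :
    (numPolytopes d n x : ℝ) ≤ ∑ R ∈ 𝓡, ∏ i, (1 + indicator R 1 (x i)) := by
  have term_nonneg (s : Finset (Fin n)) (R : Set (E d)) :
      (0 : ℝ) ≤ ∏ i ∈ s, indicator R 1 (x i) :=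
    Finset.prod_nonneg fun _ _ => indicator_nonneg (fun _ _ => zero_le_one) _
  simp only [Finset.prod_one_add, Finset.powerset_univ]
  rw [numPolytopes_eq_sum_indicator, Finset.sum_comm]
  refine (Finset.sum_le_sum fun s _ => ?_).trans <|
    Finset.sum_le_sum_of_subset_of_nonneg (Finset.subset_univ _) fun s _ _ =>
      Finset.sum_nonneg fun R _ => term_nonneg s R
  refine indicator_apply_le' (fun hs => ?_) fun _ => Finset.sum_nonneg fun R _ => term_nonneg s R
  obtain ⟨R, hR, subset_R⟩ :=
    cover (x '' s) (image_subset_iff.mpr fun i _ => hx i) (s.finite_toSet.image x) hs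
  calc (1 : ℝ) = ∏ i ∈ s, indicator R 1 (x i) := Eq.symm <| Finset.prod_eq_one fun i hi =>
        indicator_of_mem (subset_R (mem_image_of_mem x hi)) 1
    _ ≤ _ := Finset.single_le_sum (fun R _ => term_nonneg s R) hR

lemma integral_numPolytopes_le_of_cover (μ : Measure (E d)) [IsProbabilityMeasure μ]
    {D : Set (E d)} (hD : ∀ᵐ x ∂μ, x ∈ D) {𝓡 : Finset (Set (E d))}
    (cover : ∀ X ⊆ D, X.Finite → ConvexPosition X → ∃ R ∈ 𝓡, X ⊆ R)
    (h𝓡 : ∀ R ∈ 𝓡, MeasurableSet R) {p : ℝ} (hp : ∀ R ∈ 𝓡, μ.real R ≤ p) :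
    ∫ x, (numPolytopes d n x : ℝ) ∂(Measure.pi fun _ : Fin n => μ) ≤ 𝓡.card * (1 + p) ^ n := by
  have sample_mem : ∀ᵐ x ∂(Measure.pi fun _ : Fin n => μ), ∀ i, x i ∈ D :=
    ae_all_iff.mpr fun i => (Measure.tendsto_eval_ae_ae (μ := fun _ => μ) (i := i)).eventually hD
  have indicator_integrable (R) (hR : R ∈ 𝓡) : Integrable (indicator R (1 : E d → ℝ)) μ :=
    (integrable_const 1).indicator (h𝓡 R hR)
  have prod_integrable (R) (hR : R ∈ 𝓡) :
      Integrable (fun x => ∏ i, (1 + indicator R (1 : E d → ℝ) (x i)))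
        (Measure.pi fun _ : Fin n => μ) :=
    .fintype_prod (f := fun _ y => 1 + indicator R 1 y) fun _ =>
      (integrable_const 1).add (indicator_integrable R hR)
  calc _ ≤ ∫ x, ∑ R ∈ 𝓡, ∏ i, (1 + indicator R (1 : E d → ℝ) (x i))
          ∂(Measure.pi fun _ : Fin n => μ) := by
        refine integral_mono_ae (integrable_numPolytopes d n _)
          (integrable_finsetSum _ prod_integrable) ?_
        filter_upwards [sample_mem] with x hx using numPolytopes_le_sum_prod cover hx
    _ = ∑ R ∈ 𝓡, (1 + μ.real R) ^ n := by
        rw [integral_finsetSum _ prod_integrable]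
        refine Finset.sum_congr rfl fun R hR => ?_
        rw [integral_fintype_prod_eq_pow (fun y => 1 + indicator R 1 y), Fintype.card_fin,
          integral_add (integrable_const 1) (indicator_integrable R hR),
          integral_indicator_one (h𝓡 R hR), integral_const, probReal_univ, one_smul]
    _ ≤ ∑ _R ∈ 𝓡, (1 + p) ^ n := by
        gcongr with R hR
        exact hp R hR
    _ = _ := by rw [Finset.sum_const, nsmul_eq_mul]

lemma pow_le_rpow_div_of_pow_le {j k : ℕ} (hk : k ≠ 0) {x y : ℝ} (hy : 0 ≤ y) (h : y ^ k ≤ x) :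
    y ^ j ≤ x ^ ((j : ℝ) / k) := by
  calc y ^ j = (y ^ k) ^ ((j : ℝ) / k) := by
        rw [← Real.rpow_natCast_mul hy, mul_div_cancel₀ _ (by exact_mod_cast hk), Real.rpow_natCast]
    _ ≤ x ^ ((j : ℝ) / k) := by gcongr

lemma two_pow_mul_one_add_pow_le_exp (k n : ℕ) {p : ℝ} (hp : 0 ≤ p) :
    (2 : ℝ) ^ k * (1 + p) ^ n ≤ Real.exp (k + n * p) := by
  have two_le : (2 : ℝ) ≤ Real.exp 1 := by linarith [Real.add_one_le_exp 1]
  calc (2 : ℝ) ^ k * (1 + p) ^ n ≤ Real.exp 1 ^ k * Real.exp p ^ n := by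
        gcongr
        linarith [Real.add_one_le_exp p]
    _ = Real.exp (k + n * p) := by
        rw [← Real.exp_nat_mul, ← Real.exp_nat_mul, mul_one, Real.exp_add]

lemma exists_eventually_integral_numPolytopes_le_exp (m : ℕ) [NeZero m] {c : ℝ} (hc : 0 ≤ c) :
    ∃ c₂ : ℝ, 0 < c₂ ∧ ∀ᶠ n : ℕ in atTop, ∀ (μ : Measure (E (m + 1))) [IsProbabilityMeasure μ],
      (∀ᵐ x ∂μ, x ∈ cube (m + 1) 1) → μ ≤ ENNReal.ofReal c • volume →
        ∫ x, (numPolytopes (m + 1) n x : ℝ) ∂(Measure.pi fun _ : Fin n => μ) ≤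
          Real.exp (c₂ * (n : ℝ) ^ ((m : ℝ) / (m + 2))) := by
  obtain ⟨C, A, exists_cover⟩ := exists_cover_convexPosition m
  refine ⟨C + c * A * 2 ^ (m + 2) + 1, by positivity, ?_⟩
  filter_upwards [eventually_exists_nat_pow_le_mul (m + 1).succ_ne_zero one_pos 1]
    with n ⟨N, one_le, pow_le, le_pow⟩ μ _ hμ μ_le
  have N_pos : (0 : ℝ) < N := by exact_mod_cast one_le
  rw [one_mul] at pow_le le_pow
  obtain ⟨𝓡, card_le, h𝓡, cover⟩ := exists_cover N (by lia)
  have μ_real_le (R) (hR : R ∈ 𝓡) : μ.real R ≤ c * (A / N ^ 2) := by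
    refine ENNReal.toReal_le_of_le_ofReal (by positivity) ((μ_le R).trans ?_)
    rw [ENNReal.ofReal_mul hc, Measure.smul_apply, smul_eq_mul]
    gcongr
    exact (h𝓡 R hR).2
  have pow_le_rpow : (N : ℝ) ^ m ≤ n ^ ((m : ℝ) / (m + 2)) := by
    exact_mod_cast pow_le_rpow_div_of_pow_le (j := m) (m + 1).succ_ne_zero N_pos.le pow_le
  have mul_le : (n : ℝ) * (c * (A / N ^ 2)) ≤ c * A * 2 ^ (m + 2) * N ^ m := by
    calc (n : ℝ) * (c * (A / N ^ 2)) ≤ (2 * N) ^ (m + 2) * (c * (A / N ^ 2)) := by gcongr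
      _ = c * A * 2 ^ (m + 2) * N ^ m := by
          field_simp
          ring
  calc _ ≤ (𝓡.card : ℝ) * (1 + c * (A / N ^ 2)) ^ n :=
        integral_numPolytopes_le_of_cover μ hμ cover (fun R hR => (h𝓡 R hR).1) μ_real_le
    _ ≤ 2 ^ (C * N ^ m) * (1 + c * (A / N ^ 2)) ^ n := by
        gcongr
        exact_mod_cast card_le
    _ ≤ Real.exp ((C * N ^ m : ℕ) + n * (c * (A / N ^ 2))) :=
        two_pow_mul_one_add_pow_le_exp _ _ (by positivity)
    _ ≤ _ := by
        refine Real.exp_le_exp.mpr ?_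
        push_cast
        calc _ ≤ C * (N : ℝ) ^ m + c * A * 2 ^ (m + 2) * N ^ m := by gcongr
          _ ≤ (C + c * A * 2 ^ (m + 2) + 1) * N ^ m := by linarith [pow_pos N_pos m]
          _ ≤ _ := by gcongr

end UpperBound

section UniformSamples

variable {d : ℕ} {r : ℝ} {K L S : Set (E d)}

lemma isProbabilityMeasure_unifOn (hK₀ : volume K ≠ 0) (hK : volume K ≠ ⊤) :
    IsProbabilityMeasure (unifOn d K) :=
  ProbabilityTheory.cond_isProbabilityMeasure_of_finite hK₀ hK

lemma volume_cube (d : ℕ) (r : ℝ) : volume (cube d r) = ENNReal.ofReal (2 * r) ^ d := by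
  have cube_eq : cube d r = WithLp.ofLp ⁻¹' Icc (fun _ => -r) fun _ => r := by
    ext x
    simp only [cube, mem_ofPred_eq, abs_le, forall_and, mem_preimage, mem_Icc, Pi.le_def]
  rw [cube_eq, (PiLp.volume_preserving_ofLp (Fin d)).measure_preimage
    measurableSet_Icc.nullMeasurableSet, Real.volume_Icc_pi]
  simp only [sub_neg_eq_add, ← two_mul, Finset.prod_const, Finset.card_univ, Fintype.card_fin]

lemma volume_cube_ne_top : volume (cube d r) ≠ ⊤ := by
  rw [volume_cube]
  exact ENNReal.pow_ne_top ENNReal.ofReal_ne_top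

lemma volume_cube_ne_zero (hr : 0 < r) : volume (cube d r) ≠ 0 := by
  rw [volume_cube]
  exact pow_ne_zero _ (ENNReal.ofReal_pos.mpr (by positivity)).ne'

lemma unifOn_le_smul_volume (hLK : L ⊆ K) (hL₀ : volume L ≠ 0) (hL : volume L ≠ ⊤) :
    unifOn d K ≤ ENNReal.ofReal (volume.real L)⁻¹ • volume := by
  have L_pos : 0 < volume.real L := ENNReal.toReal_pos hL₀ hL
  rw [ENNReal.ofReal_inv_of_pos L_pos, ofReal_measureReal hL]
  exact fun S => mul_le_mul' (ENNReal.inv_le_inv.mpr (measure_mono hLK))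
    (Measure.restrict_apply_le K S)

lemma mul_volume_real_le_unifOn_real (hSK : S ⊆ K) (hKL : K ⊆ L) (hK₀ : volume K ≠ 0)
    (hL : volume L ≠ ⊤) : (volume.real L)⁻¹ * volume.real S ≤ (unifOn d K).real S := by
  have := isProbabilityMeasure_unifOn hK₀ (measure_ne_top_of_subset hKL hL)
  calc (volume.real L)⁻¹ * volume.real S = ((volume L)⁻¹ * volume S).toReal := by
        rw [ENNReal.toReal_mul, ENNReal.toReal_inv]
        rfl
    _ ≤ (unifOn d K).real S := by
        refine ENNReal.toReal_mono (measure_ne_top _ S) ?_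
        rw [unifOn, Measure.smul_apply, Measure.restrict_eq_self volume hSK, smul_eq_mul]
        gcongr

lemma integral_numPolytopes_sampleMeasure_image (T : E d ≃ᵃ[ℝ] E d) (n : ℕ)
    (hK₀ : volume K ≠ 0) (hK : volume K ≠ ⊤) :
    ∫ x, (numPolytopes d n x : ℝ) ∂(sampleMeasure d n (T '' K)) =
      ∫ x, (numPolytopes d n x : ℝ) ∂(sampleMeasure d n K) := by
  have := isProbabilityMeasure_unifOn hK₀ hK
  rw [sampleMeasure, unifOn_image_affineEquiv]
  exact integral_numPolytopes_map (unifOn d K) (f := T.toAffineMap) T.injective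

end UniformSamples

lemma exists_eventually_log_bounds_of_cube_subset (m : ℕ) [NeZero m] {r : ℝ} (hr : 0 < r) :
    ∃ c₁ c₂ : ℝ, 0 < c₁ ∧ 0 < c₂ ∧ ∀ᶠ n : ℕ in atTop, ∀ K : Set (E (m + 1)), MeasurableSet K →
      cube (m + 1) r ⊆ K → K ⊆ cube (m + 1) 1 →
        c₁ * (n : ℝ) ^ ((m : ℝ) / (m + 2)) ≤
            Real.log (∫ x, (numPolytopes (m + 1) n x : ℝ) ∂(sampleMeasure (m + 1) n K)) ∧
          Real.log (∫ x, (numPolytopes (m + 1) n x : ℝ) ∂(sampleMeasure (m + 1) n K)) ≤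
            c₂ * (n : ℝ) ^ ((m : ℝ) / (m + 2)) := by
  have volume_pos {s : ℝ} (hs : 0 < s) : 0 < volume.real (cube (m + 1) s) :=
    ENNReal.toReal_pos (volume_cube_ne_zero hs) volume_cube_ne_top
  obtain ⟨c₁, c₁_pos, lower⟩ := exists_eventually_exp_le_integral_numPolytopes (m := m) hr
    (inv_pos.mpr (volume_pos one_pos))
  obtain ⟨c₂, c₂_pos, upper⟩ := exists_eventually_integral_numPolytopes_le_exp m
    (inv_nonneg.mpr (volume_pos hr).le)
  refine ⟨c₁, c₂, c₁_pos, c₂_pos, ?_⟩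
  filter_upwards [lower, upper] with n lower upper K K_measurable r_subset subset_one
  have K_ne_zero : volume K ≠ 0 :=
    (measure_pos_of_superset r_subset (volume_cube_ne_zero hr)).ne'
  have := isProbabilityMeasure_unifOn K_ne_zero
    (measure_ne_top_of_subset subset_one volume_cube_ne_top)
  have exp_le := lower (unifOn (m + 1) K) fun S S_subset _ =>
    mul_volume_real_le_unifOn_real (S_subset.trans r_subset) subset_one K_ne_zero volume_cube_ne_top
  have le_exp := upper (unifOn (m + 1) K)
    ((Measure.ae_smul_measure (ae_restrict_mem K_measurable) _).mono fun x hx => subset_one hx)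
    (unifOn_le_smul_volume r_subset (volume_cube_ne_zero hr) volume_cube_ne_top)
  have integral_pos := (Real.exp_pos _).trans_le exp_le
  exact ⟨(Real.le_log_iff_exp_le integral_pos).mpr exp_le,
    (Real.log_le_iff_le_exp integral_pos).mpr le_exp⟩

theorem log_expected_number_of_polytopes_general (d : ℕ) (hd : 2 ≤ d) :
    ∃ c₁ c₂ : ℝ, 0 < c₁ ∧ 0 < c₂ ∧ ∀ᶠ n : ℕ in atTop,
      ∀ K : Set (E d), IsCompact K → Convex ℝ K → (interior K).Nonempty →
        c₁ * (n : ℝ) ^ (((d : ℝ) - 1) / ((d : ℝ) + 1)) ≤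
            Real.log (∫ x, (numPolytopes d n x : ℝ) ∂(sampleMeasure d n K)) ∧
          Real.log (∫ x, (numPolytopes d n x : ℝ) ∂(sampleMeasure d n K)) ≤
            c₂ * (n : ℝ) ^ (((d : ℝ) - 1) / ((d : ℝ) + 1)) := by
  obtain ⟨m, rfl⟩ : ∃ m, d = m + 1 := Nat.exists_eq_add_one.mpr (by lia)
  have : NeZero m := ⟨by lia⟩
  obtain ⟨c₁, c₂, c₁_pos, c₂_pos, log_bounds⟩ :=
    exists_eventually_log_bounds_of_cube_subset m (r := 1 / (2 * (m + 1 : ℕ))) (by positivity)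
  refine ⟨c₁, c₂, c₁_pos, c₂_pos, ?_⟩
  filter_upwards [log_bounds] with n log_bounds K K_compact K_convex interior_nonempty
  obtain ⟨T, subset_image, image_subset⟩ :=
    exists_affineEquiv_cube_subset_image_subset_cube K_compact K_convex interior_nonempty
  have image_compact : IsCompact (T '' K) :=
    K_compact.image T.toAffineMap.continuous_of_finiteDimensional
  have exponent_eq : (((m + 1 : ℕ) : ℝ) - 1) / ((m + 1 : ℕ) + 1) = m / (m + 2) := by
    push_cast
    ring
  rw [exponent_eq, ← integral_numPolytopes_sampleMeasure_image T n
    (Measure.measure_pos_of_nonempty_interior volume interior_nonempty).ne'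
    K_compact.measure_ne_top]
  exact log_bounds _ image_compact.measurableSet subset_image image_subset

/-- For every convex body `K ⊆ ℝ^d` there are constants `c₁, c₂ > 0` depending only on `d`
with `c₁ n^{(d-1)/(d+1)} ≤ log E|Q(X_n)| ≤ c₂ n^{(d-1)/(d+1)}` for all large `n`. -/
theorem log_expected_number_of_polytopes (d : ℕ) (hd : 2 ≤ d) :
    ∃ c₁ c₂ : ℝ, 0 < c₁ ∧ 0 < c₂ ∧
      ∀ (K : Set (E d)), IsCompact K → Convex ℝ K → (interior K).Nonempty →
        ∃ N : ℕ, ∀ n : ℕ, N ≤ n →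
          c₁ * (n : ℝ) ^ (((d : ℝ) - 1) / ((d : ℝ) + 1)) ≤
              Real.log (∫ x, (numPolytopes d n x : ℝ) ∂(sampleMeasure d n K)) ∧
          Real.log (∫ x, (numPolytopes d n x : ℝ) ∂(sampleMeasure d n K)) ≤
              c₂ * (n : ℝ) ^ (((d : ℝ) - 1) / ((d : ℝ) + 1)) := by
  obtain ⟨c₁, c₂, c₁_pos, c₂_pos, log_bounds⟩ := log_expected_number_of_polytopes_general d hd
  obtain ⟨N, hN⟩ := eventually_atTop.mp log_bounds
  exact ⟨c₁, c₂, c₁_pos, c₂_pos, fun K K_compact K_convex interior_nonempty =>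
    ⟨N, fun n hn => hN n hn K K_compact K_convex interior_nonempty⟩⟩
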